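/- Let W be any simple-dispersion DMC, i.e., 0 < V_min = V_max. Then for every ε ∈ (0,1), limsup_{n→∞} (log M*_fb(n, ε) − nC)/√n ≤ √(V_min)·Φ^{-1}(ε) = √(V_ε)·Φ^{-1}(ε). In other words, feedback does not improve the second-order coding rate of simple-dispersion channels. -/

import Mathlib

open MeasureTheory Real Filter Set
open scoped BigOperators ENNReal Classical

noncomputable section

namespace Paper

variable {X Y : Type*} [Fintype X] [Fintype Y]

/-- `P` is a probability mass function on the finite alphabet `X`. -/
def IsDist (P : X → ℝ) : Prop := (∀ x, 0 ≤ P x) ∧ ∑ x, P x = 1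

/-- `W` is a discrete memoryless channel (a stochastic matrix). -/
def IsChannel (W : X → Y → ℝ) : Prop := ∀ x, IsDist (W x)

/-- `W` has no all-zero column. -/
def NoZeroColumn (W : X → Y → ℝ) : Prop := ∀ y, ∃ x, 0 < W x y

/-- Output distribution induced by input distribution `P` through `W`. -/
def outDist (P : X → ℝ) (W : X → Y → ℝ) (y : Y) : ℝ := ∑ x, P x * W x y

/-- Mutual information `I(P; W)` (in nats). -/
def mutInfo (P : X → ℝ) (W : X → Y → ℝ) : ℝ :=
  ∑ x, ∑ y, P x * W x y * Real.log (W x y / outDist P W y)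

/-- Shannon capacity `C`. -/
def capacity (W : X → Y → ℝ) : ℝ :=
  sSup {c | ∃ P, IsDist P ∧ mutInfo P W = c}

/-- The set of capacity-achieving input distributions `Π*`. -/
def capacityAchievers (W : X → Y → ℝ) : Set (X → ℝ) :=
  {P | IsDist P ∧ mutInfo P W = capacity W}

/-- The (unique) capacity-achieving output distribution `q*`. -/
def qStar (W : X → Y → ℝ) : Y → ℝ :=
  if h : (capacityAchievers W).Nonempty then outDist h.choose W else fun _ => 0

/-- The information density `i*(x,y) = log (W(y|x)/q*(y))`. -/
def iStar (W : X → Y → ℝ) (x : X) (y : Y) : ℝ := Real.log (W x y / qStar W y)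

/-- `ν_x = Var[i*(x,Y)]`, `Y ~ W(·|x)`. -/
def nu (W : X → Y → ℝ) (x : X) : ℝ :=
  ∑ y, W x y * (iStar W x y) ^ 2 - (∑ y, W x y * iStar W x y) ^ 2

/-- `V_min`. -/
def Vmin (W : X → Y → ℝ) : ℝ :=
  sInf {v | ∃ P ∈ capacityAchievers W, v = ∑ x, P x * nu W x}

/-- `V_max`. -/
def Vmax (W : X → Y → ℝ) : ℝ :=
  sSup {v | ∃ P ∈ capacityAchievers W, v = ∑ x, P x * nu W x}

/-- `V_ε`. -/
def Veps (W : X → Y → ℝ) (ε : ℝ) : ℝ := if ε < 1/2 then Vmin W else Vmax W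

/-- `ν_min = min_x ν_x`. -/
def numin (W : X → Y → ℝ) [Nonempty X] : ℝ := ⨅ x, nu W x

/-- `ν_max = max_x ν_x`. -/
def numax (W : X → Y → ℝ) [Nonempty X] : ℝ := ⨆ x, nu W x

/-- Average error probability of the feedback code `(enc, dec)` with `M` messages
and blocklength `n`. -/
def errProb (W : X → Y → ℝ) (n M : ℕ) (enc : Fin M → List Y → X)
    (dec : (Fin n → Y) → Fin M) : ℝ :=
  (M : ℝ)⁻¹ * ∑ m : Fin M, ∑ y : Fin n → Y,
    (∏ k : Fin n, W (enc m ((List.ofFn y).take (k : ℕ))) (y k)) *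
      (if dec y = m then 0 else 1)

/-- Minimum average error probability of `(n,R)` feedback codes. -/
def minErr (W : X → Y → ℝ) (n : ℕ) (R : ℝ) : ℝ :=
  sInf {e | ∃ enc dec, e = errProb W n ⌈Real.exp (n * R)⌉₊ enc dec}

/-- `M*_fb(n, ε)`. -/
def Mfb (W : X → Y → ℝ) (n : ℕ) (ε : ℝ) : ℝ :=
  sSup {m | ∃ R : ℝ, m = (⌈Real.exp (n * R)⌉₊ : ℝ) ∧ minErr W n R ≤ ε}

/-- Standard Gaussian density `φ`. -/
def gpdf (u : ℝ) : ℝ := (Real.sqrt (2 * Real.pi))⁻¹ * Real.exp (-u ^ 2 / 2)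

/-- Standard Gaussian CDF `Φ`. -/
def gcdf (t : ℝ) : ℝ := ∫ u in Set.Iic t, gpdf u

/-- Inverse Gaussian CDF `Φ⁻¹`. -/
def gcdfInv : ℝ → ℝ := Function.invFun gcdf

/-- The sequence `(log M*_fb(n,ε) - nC)/√n` whose liminf/limsup is the
second-order coding rate with feedback. -/
def SOfb (W : X → Y → ℝ) (ε : ℝ) (n : ℕ) : ℝ :=
  (Real.log (Mfb W n ε) - n * capacity W) / Real.sqrt n

/-!
Compare the law of the outputs under a feedback code with a fixed mixture `μ` of finitely many
memoryless laws. A decoder can do no better than the bound obtained from the event that the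
likelihood of the outputs exceeds `exp (nC + t√n) μ`, so it suffices to show that, whatever the
feedback, this event has probability at most about `1 - Φ(t / √V)`.

One component of `μ` is the capacity-achieving output law `q*`. The log-likelihood ratio against
`q*` is a martingale, whose increments have conditional variance `ν_x`, plus a drift which is at
most `C` per step. If the empirical distribution `P` of the inputs has `∑ P(x) ν_x` close to `V`,
the quadratic variation is about `nV` however the inputs were chosen. Composing the martingale
with the solution `Φ(w / √s)` of the heat equation, run backwards against the quadratic variation,
gives almost a submartingale, and hence the Gaussian bound on the tail. If `∑ P(x) ν_x` is far
from `V`, simple dispersion says that `P` does not achieve the capacity, and by compactness one of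
the other components `q` of `μ` satisfies `∑ P(x) D(W(·|x) ‖ q) < C - c`, so that Chebyshev's
inequality makes the event unlikely.

A `limsup` of reals is only meaningful for a bounded sequence; Feinstein's code construction gives
the lower bound.
-/

open scoped Function Topology

/-! ### Relative entropy and mutual information -/

/-- The relative entropy `D(p ‖ q)` of two mass functions, used as `relEntropy (W x) q` for a row of
a channel. It is the divergence only if `q y = 0` implies `p y = 0`: otherwise the convention
`x / 0 = 0` drops terms that should be infinite. -/
def relEntropy (p q : Y → ℝ) : ℝ := ∑ y, p y * log (p y / q y)

lemma sub_le_mul_log_div {p q : ℝ} (hp : 0 ≤ p) (hq : 0 ≤ q) (hpq : p ≠ 0 → q ≠ 0) :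
    p - q ≤ p * log (p / q) := by
  rcases hp.eq_or_lt with rfl | hp
  · simpa using hq
  have hq : 0 < q := hq.lt_of_ne' (hpq hp.ne')
  have hlog := mul_le_mul_of_nonneg_left (one_sub_inv_le_log_of_pos (div_pos hp hq)) hp.le
  rwa [inv_div, mul_sub, mul_one, mul_div_cancel₀ _ hp.ne'] at hlog

lemma sum_sub_sum_le_relEntropy {p q : Y → ℝ} (hp : ∀ y, 0 ≤ p y) (hq : ∀ y, 0 ≤ q y)
    (hpq : ∀ y, p y ≠ 0 → q y ≠ 0) : ∑ y, p y - ∑ y, q y ≤ relEntropy p q := by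
  rw [← Finset.sum_sub_distrib]
  exact Finset.sum_le_sum fun y _ => sub_le_mul_log_div (hp y) (hq y) (hpq y)

lemma relEntropy_nonneg {p q : Y → ℝ} (hp : IsDist p) (hq : IsDist q)
    (hpq : ∀ y, p y ≠ 0 → q y ≠ 0) : 0 ≤ relEntropy p q := by
  simpa [hp.2, hq.2] using sum_sub_sum_le_relEntropy hp.1 hq.1 hpq

lemma mul_log_div_sub_one_le_relEntropy {p q : Y → ℝ} (hp : IsDist p) (hq : IsDist q)
    (hpq : ∀ y, p y ≠ 0 → q y ≠ 0) (y : Y) : p y * log (p y / q y) - 1 ≤ relEntropy p q := by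
  have hrest : ∑ z ∈ Finset.univ.erase y, (p z - q z) ≤
      ∑ z ∈ Finset.univ.erase y, p z * log (p z / q z) :=
    Finset.sum_le_sum fun z _ => sub_le_mul_log_div (hp.1 z) (hq.1 z) (hpq z)
  have hp_sum := Finset.add_sum_erase _ p (Finset.mem_univ y)
  have hq_sum := Finset.add_sum_erase _ q (Finset.mem_univ y)
  have hp_rest : 0 ≤ ∑ z ∈ Finset.univ.erase y, p z := Finset.sum_nonneg fun z _ => hp.1 z
  rw [Finset.sum_sub_distrib] at hrest
  rw [relEntropy, ← Finset.add_sum_erase _ _ (Finset.mem_univ y)]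
  linarith [hq.1 y, hq.2]

lemma IsDist.le_one {P : X → ℝ} (hP : IsDist P) (x : X) : P x ≤ 1 :=
  hP.2 ▸ Finset.single_le_sum (f := P) (fun x _ => hP.1 x) (Finset.mem_univ x)

lemma IsDist.mix {p q : Y → ℝ} (hp : IsDist p) (hq : IsDist q) {r : ℝ} (hr₀ : 0 ≤ r)
    (hr₁ : r ≤ 1) : IsDist ((1 - r) • p + r • q) :=
  convex_stdSimplex ℝ Y hp hq (sub_nonneg.2 hr₁) hr₀ (by ring)

lemma isDist_single (x : X) : IsDist (Pi.single x 1 : X → ℝ) :=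
  single_mem_stdSimplex ℝ x

lemma IsDist.abs_sum_mul_le {P : X → ℝ} (hP : IsDist P) (f : X → ℝ) :
    |∑ x, P x * f x| ≤ ∑ x, |f x| := by
  refine (Finset.abs_sum_le_sum_abs _ _).trans (Finset.sum_le_sum fun x _ => ?_)
  rw [abs_mul, abs_of_nonneg (hP.1 x)]
  exact mul_le_of_le_one_left (abs_nonneg _) (hP.le_one x)

omit [Fintype Y] in
lemma outDist_mix (r : ℝ) (P Q : X → ℝ) (W : X → Y → ℝ) :
    outDist ((1 - r) • P + r • Q) W = (1 - r) • outDist P W + r • outDist Q W := by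
  ext y
  simp [outDist, add_mul, Finset.sum_add_distrib, Finset.mul_sum, mul_assoc]

omit [Fintype Y] in
lemma outDist_single (x : X) (W : X → Y → ℝ) : outDist (Pi.single x 1) W = W x := by
  ext y
  simp [outDist, Pi.single_apply]

lemma isDist_outDist {P : X → ℝ} {W : X → Y → ℝ} (hP : IsDist P) (hW : IsChannel W) :
    IsDist (outDist P W) := by
  refine ⟨fun y => Finset.sum_nonneg fun x _ => mul_nonneg (hP.1 x) ((hW x).1 y), ?_⟩
  simp_rw [outDist]
  rw [Finset.sum_comm]
  simp_rw [← Finset.mul_sum, (hW _).2, mul_one, hP.2]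

omit [Fintype Y] in
lemma outDist_ne_zero {P : X → ℝ} {W : X → Y → ℝ} (hP : ∀ x, 0 ≤ P x) (hW : ∀ x y, 0 ≤ W x y)
    {x : X} {y : Y} (h : P x * W x y ≠ 0) : outDist P W y ≠ 0 := by
  have hnonneg : ∀ x, 0 ≤ P x * W x y := fun x => mul_nonneg (hP x) (hW x y)
  have hle : P x * W x y ≤ outDist P W y :=
    Finset.single_le_sum (f := fun x => P x * W x y) (fun x _ => hnonneg x) (Finset.mem_univ x)
  exact (((hnonneg x).lt_of_ne' h).trans_le hle).ne'

lemma mutInfo_eq_sum_mul_relEntropy (P : X → ℝ) (W : X → Y → ℝ) :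
    mutInfo P W = ∑ x, P x * relEntropy (W x) (outDist P W) := by
  simp only [mutInfo, relEntropy, Finset.mul_sum, mul_assoc]

lemma sum_mul_relEntropy_eq_mutInfo_add {P : X → ℝ} {W : X → Y → ℝ} (hP : ∀ x, 0 ≤ P x)
    (hW : ∀ x y, 0 ≤ W x y) {q : Y → ℝ} (hq : ∀ y, outDist P W y ≠ 0 → q y ≠ 0) :
    ∑ x, P x * relEntropy (W x) q = mutInfo P W + relEntropy (outDist P W) q := by
  have hout : relEntropy (outDist P W) q =
      ∑ x, ∑ y, P x * W x y * log (outDist P W y / q y) := by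
    rw [Finset.sum_comm]
    simp only [relEntropy, outDist, Finset.sum_mul]
  rw [hout, mutInfo, ← Finset.sum_add_distrib]
  simp_rw [relEntropy, Finset.mul_sum, ← Finset.sum_add_distrib, ← mul_add, ← mul_assoc]
  refine Finset.sum_congr rfl fun x _ => Finset.sum_congr rfl fun y _ => ?_
  rcases eq_or_ne (P x * W x y) 0 with h | h
  · simp [h]
  have ho := outDist_ne_zero hP hW h
  rw [← log_mul (div_ne_zero (right_ne_zero_of_mul h) ho) (div_ne_zero ho (hq y ho)),
    div_mul_div_cancel₀ ho]

/-! ### Capacity and its achievers -/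

lemma bddAbove_mutInfo {W : X → Y → ℝ} (hW : IsChannel W) :
    BddAbove {c | ∃ P, IsDist P ∧ mutInfo P W = c} := by
  refine ⟨∑ x, |relEntropy (W x) 1| + (Fintype.card Y - 1), ?_⟩
  rintro _ ⟨P, hP, rfl⟩
  have hout := isDist_outDist hP hW
  have hgolden := sum_mul_relEntropy_eq_mutInfo_add (q := 1) hP.1 (fun x => (hW x).1) (by simp)
  have hent : 1 - (Fintype.card Y : ℝ) ≤ relEntropy (outDist P W) 1 := by
    simpa [hout.2] using sum_sub_sum_le_relEntropy (q := 1) hout.1 (by simp) (by simp)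
  have habs := (abs_le.1 (hP.abs_sum_mul_le fun x => relEntropy (W x) 1)).2
  linarith

lemma mutInfo_le_capacity {W : X → Y → ℝ} (hW : IsChannel W) {P : X → ℝ} (hP : IsDist P) :
    mutInfo P W ≤ capacity W :=
  le_csSup (bddAbove_mutInfo hW) ⟨P, hP, rfl⟩

/- Moving an achiever `P` a distance `r` towards the letter `x` must not increase the mutual
information. -/
lemma relEntropy_mix_le_capacity {W : X → Y → ℝ} (hW : IsChannel W) {P : X → ℝ}
    (hP : P ∈ capacityAchievers W) (x : X) {r : ℝ} (hr₀ : 0 < r) (hr₁ : r < 1) :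
    relEntropy (W x) ((1 - r) • outDist P W + r • W x) ≤ capacity W := by
  set q : Y → ℝ := (1 - r) • outDist P W + r • W x with hq
  have hout := isDist_outDist hP.1 hW
  have hP' := hP.1.mix (isDist_single x) hr₀.le hr₁.le
  have hac : ∀ y, outDist P W y ≠ 0 → q y ≠ 0 := fun y hy =>
    (add_pos_of_pos_of_nonneg (mul_pos (sub_pos.2 hr₁) ((hout.1 y).lt_of_ne' hy))
      (mul_nonneg hr₀.le ((hW x).1 y))).ne'
  have hmix : mutInfo ((1 - r) • P + r • Pi.single x 1) W =
      (1 - r) * (capacity W + relEntropy (outDist P W) q) + r * relEntropy (W x) q := by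
    rw [mutInfo_eq_sum_mul_relEntropy, outDist_mix, outDist_single, ← hq, ← hP.2,
      ← sum_mul_relEntropy_eq_mutInfo_add hP.1.1 (fun x => (hW x).1) hac]
    simp [add_mul, Finset.sum_add_distrib, Finset.mul_sum, mul_assoc, Pi.single_apply]
  have hle := mutInfo_le_capacity hW hP'
  have hnonneg := mul_nonneg (sub_pos.2 hr₁).le
    (relEntropy_nonneg hout (hout.mix (hW x) hr₀.le hr₁.le) hac)
  rw [hmix] at hle
  exact le_of_mul_le_mul_left (by linarith) hr₀

/- An output of probability `0` would make `relEntropy_mix_le_capacity` fail for small `r`. -/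
lemma outDist_pos_of_mem_capacityAchievers {W : X → Y → ℝ} (hW : IsChannel W)
    (hcol : NoZeroColumn W) {P : X → ℝ} (hP : P ∈ capacityAchievers W) (y : Y) :
    0 < outDist P W y := by
  have hout := isDist_outDist hP.1 hW
  refine (hout.1 y).lt_of_ne' fun h0 => ?_
  obtain ⟨x, hx⟩ := hcol y
  set K := |capacity W| + 2
  set r := exp (-(K / W x y)) with hr
  have hr₀ : 0 < r := exp_pos _
  have hr₁ : r < 1 := exp_lt_one_iff.2 (neg_neg_of_pos (by positivity))
  have hac : ∀ y, W x y ≠ 0 → ((1 - r) • outDist P W + r • W x) y ≠ 0 := fun y hy =>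
    (add_pos_of_nonneg_of_pos (mul_nonneg (sub_pos.2 hr₁).le (hout.1 y))
      (mul_pos hr₀ (((hW x).1 y).lt_of_ne' hy))).ne'
  have hterm : W x y * log (W x y / ((1 - r) • outDist P W + r • W x) y) = K := by
    simp only [Pi.add_apply, Pi.smul_apply, h0, smul_eq_mul, mul_zero, zero_add]
    rw [div_mul_cancel_right₀ hx.ne', log_inv, hr, log_exp, neg_neg, mul_div_cancel₀ _ hx.ne']
  have hlow := mul_log_div_sub_one_le_relEntropy (hW x) (hout.mix (hW x) hr₀.le hr₁.le) hac y
  have hup := relEntropy_mix_le_capacity hW hP x hr₀ hr₁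
  linarith [le_abs_self (capacity W)]

lemma relEntropy_outDist_le_capacity {W : X → Y → ℝ} (hW : IsChannel W) {P : X → ℝ}
    (hP : P ∈ capacityAchievers W) (hpos : ∀ y, 0 < outDist P W y) (x : X) :
    relEntropy (W x) (outDist P W) ≤ capacity W := by
  have hcont : ContinuousAt
      (fun r : ℝ => relEntropy (W x) ((1 - r) • outDist P W + r • W x)) 0 := by
    refine tendsto_finsetSum _ fun y _ => ?_
    rcases eq_or_ne (W x y) 0 with hw | hw
    · simp [hw]
    refine continuousAt_const.mul (ContinuousAt.log (continuousAt_const.div ?_ ?_) ?_)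
    · simp only [Pi.add_apply, Pi.smul_apply]
      fun_prop
    · simpa using (hpos y).ne'
    · simpa using ⟨hw, (hpos y).ne'⟩
  have hlim := hcont.tendsto.mono_left (nhdsWithin_le_nhds (s := Ioi 0))
  simp only [sub_zero, one_smul, zero_smul, add_zero] at hlim
  refine le_of_tendsto hlim ?_
  filter_upwards [Ioo_mem_nhdsGT (zero_lt_one (α := ℝ))] with r hr
  exact relEntropy_mix_le_capacity hW hP x hr.1 hr.2

lemma relEntropy_outDist_eq_capacity {W : X → Y → ℝ} (hW : IsChannel W) {P : X → ℝ}
    (hP : P ∈ capacityAchievers W) (hpos : ∀ y, 0 < outDist P W y) {x : X} (hx : P x ≠ 0) :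
    relEntropy (W x) (outDist P W) = capacity W := by
  have hle : ∀ x ∈ Finset.univ, P x * relEntropy (W x) (outDist P W) ≤ P x * capacity W :=
    fun x _ => mul_le_mul_of_nonneg_left (relEntropy_outDist_le_capacity hW hP hpos x) (hP.1.1 x)
  have hsum : ∑ x, P x * relEntropy (W x) (outDist P W) = ∑ x, P x * capacity W := by
    rw [← mutInfo_eq_sum_mul_relEntropy, hP.2, ← Finset.sum_mul, hP.1.2, one_mul]
  exact mul_left_cancel₀ hx ((Finset.sum_eq_sum_iff_of_le hle).1 hsum x (Finset.mem_univ x))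

/-! ### Dispersion -/

/-- The log-likelihood ratio `log (p y / q y)` centred at its mean `relEntropy p q` under `p`. -/
def centredDensity (p q : Y → ℝ) (y : Y) : ℝ := log (p y / q y) - relEntropy p q

/-- The relative entropy variance `V(p ‖ q)`: the variance of `log (p / q)` under `p`. -/
def relEntropyVar (p q : Y → ℝ) : ℝ := ∑ y, p y * centredDensity p q y ^ 2

lemma sum_mul_centredDensity {p : Y → ℝ} (hp : ∑ y, p y = 1) (q : Y → ℝ) :
    ∑ y, p y * centredDensity p q y = 0 := by
  simp_rw [centredDensity, mul_sub, Finset.sum_sub_distrib, ← Finset.sum_mul, hp, one_mul,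
    relEntropy, sub_self]

lemma nu_eq_relEntropyVar {W : X → Y → ℝ} (hW : IsChannel W) (x : X) :
    nu W x = relEntropyVar (W x) (qStar W) := by
  have hmean : relEntropy (W x) (qStar W) = ∑ y, W x y * iStar W x y := rfl
  have hexpand : ∀ y, W x y * centredDensity (W x) (qStar W) y ^ 2 =
      W x y * iStar W x y ^ 2 - 2 * relEntropy (W x) (qStar W) * (W x y * iStar W x y) +
        relEntropy (W x) (qStar W) ^ 2 * W x y := fun y => by
    rw [centredDensity, iStar]
    ring
  simp_rw [relEntropyVar, hexpand, Finset.sum_add_distrib, Finset.sum_sub_distrib,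
    ← Finset.mul_sum, (hW x).2, nu, ← hmean]
  ring

lemma exists_mem_capacityAchievers_qStar_eq {W : X → Y → ℝ} (h : (capacityAchievers W).Nonempty) :
    ∃ P ∈ capacityAchievers W, qStar W = outDist P W :=
  ⟨h.choose, h.choose_spec, by simp [qStar, h]⟩

lemma capacityAchievers_nonempty {W : X → Y → ℝ} (hVmin : Vmin W ≠ 0) :
    (capacityAchievers W).Nonempty := by
  by_contra hne
  rw [not_nonempty_iff_eq_empty] at hne
  simp [Vmin, hne] at hVmin

lemma dispersion_eq_Vmin {W : X → Y → ℝ} (hsimple : Vmin W = Vmax W) {P : X → ℝ}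
    (hP : P ∈ capacityAchievers W) : ∑ x, P x * nu W x = Vmin W := by
  have hbound : ∀ Q ∈ capacityAchievers W, |∑ x, Q x * nu W x| ≤ ∑ x, |nu W x| :=
    fun Q hQ => hQ.1.abs_sum_mul_le _
  refine le_antisymm (hsimple ▸ le_csSup ⟨∑ x, |nu W x|, ?_⟩ ⟨P, hP, rfl⟩)
    (csInf_le ⟨-∑ x, |nu W x|, ?_⟩ ⟨P, hP, rfl⟩)
  · rintro _ ⟨Q, hQ, rfl⟩
    exact (abs_le.1 (hbound Q hQ)).2
  · rintro _ ⟨Q, hQ, rfl⟩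
    exact (abs_le.1 (hbound Q hQ)).1

/-! ### Suboptimal input distributions -/

lemma relEntropy_mix_le {p q : Y → ℝ} (hp : IsDist p) (hq : ∀ y, 0 ≤ q y) {r : ℝ} (hr₀ : 0 ≤ r)
    (hr₁ : r < 1) : relEntropy p ((1 - r) • p + r • q) ≤ -log (1 - r) := by
  have hr := sub_pos.2 hr₁
  have hterm : ∀ y, p y * log (p y / ((1 - r) • p + r • q) y) ≤ p y * -log (1 - r) := by
    intro y
    rcases (hp.1 y).eq_or_lt with h0 | hpos
    · simp [← h0]
    have hmass : (1 - r) * p y ≤ ((1 - r) • p + r • q) y :=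
      le_add_of_nonneg_right (mul_nonneg hr₀ (hq y))
    have hmass_pos := (mul_pos hr hpos).trans_le hmass
    rw [← log_inv]
    refine mul_le_mul_of_nonneg_left (log_le_log (div_pos hpos hmass_pos) ?_) hpos.le
    rw [div_le_iff₀ hmass_pos, inv_mul_eq_div, le_div_iff₀ hr]
    linarith
  calc relEntropy p ((1 - r) • p + r • q) ≤ ∑ y, p y * -log (1 - r) :=
        Finset.sum_le_sum fun y _ => hterm y
    _ = -log (1 - r) := by rw [← Finset.sum_mul, hp.2, one_mul]

lemma exists_sum_mul_relEntropy_lt {W : X → Y → ℝ} (hW : IsChannel W) {q₀ : Y → ℝ}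
    (hq₀ : IsDist q₀) (hq₀_pos : ∀ y, 0 < q₀ y) {P : X → ℝ} (hP : IsDist P) {c : ℝ}
    (hPc : mutInfo P W < c) :
    ∃ q : Y → ℝ, IsDist q ∧ (∀ y, 0 < q y) ∧ ∑ x, P x * relEntropy (W x) q < c := by
  set d := (c - mutInfo P W) / 2 with hd
  have hd₀ : 0 < d := by linarith
  set r := 1 - exp (-d) with hr
  have hr₀ : 0 < r := sub_pos.2 (exp_lt_one_iff.2 (neg_neg_of_pos hd₀))
  have hr₁ : r < 1 := by linarith [exp_pos (-d)]
  have hlog : -log (1 - r) = d := by rw [hr, sub_sub_cancel, log_exp, neg_neg]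
  have hout := isDist_outDist hP hW
  have hpos : ∀ y, 0 < ((1 - r) • outDist P W + r • q₀) y := fun y =>
    add_pos_of_nonneg_of_pos (mul_nonneg (sub_pos.2 hr₁).le (hout.1 y)) (mul_pos hr₀ (hq₀_pos y))
  refine ⟨_, hout.mix hq₀ hr₀.le hr₁.le, hpos, ?_⟩
  rw [sum_mul_relEntropy_eq_mutInfo_add hP.1 (fun x => (hW x).1) fun y _ => (hpos y).ne']
  linarith [relEntropy_mix_le hout hq₀.1 hr₀.le hr₁]

lemma exists_finset_sum_mul_relEntropy_le {W : X → Y → ℝ} (hW : IsChannel W) {q₀ : Y → ℝ}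
    (hq₀ : IsDist q₀) (hq₀_pos : ∀ y, 0 < q₀ y) {K : Set (X → ℝ)} (hK : IsCompact K) {c : ℝ}
    (hKc : ∀ P ∈ K, IsDist P ∧ mutInfo P W < c) :
    ∃ (Q : Finset (Y → ℝ)) (c' : ℝ), c' < c ∧ (∀ q ∈ Q, IsDist q ∧ ∀ y, 0 < q y) ∧
      ∀ P ∈ K, ∃ q ∈ Q, ∑ x, P x * relEntropy (W x) q ≤ c' := by
  refine hK.induction_on (p := fun s => ∃ (Q : Finset (Y → ℝ)) (c' : ℝ), c' < c ∧
      (∀ q ∈ Q, IsDist q ∧ ∀ y, 0 < q y) ∧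
      ∀ P ∈ s, ∃ q ∈ Q, ∑ x, P x * relEntropy (W x) q ≤ c') ?_ ?_ ?_ ?_
  · exact ⟨∅, c - 1, sub_one_lt c, by simp, by simp⟩
  · rintro s t hst ⟨Q, c', hc', hQ, h⟩
    exact ⟨Q, c', hc', hQ, fun P hP => h P (hst hP)⟩
  · rintro s t ⟨Q, c₁, hc₁, hQ, h⟩ ⟨Q', c₂, hc₂, hQ', h'⟩
    refine ⟨Q ∪ Q', max c₁ c₂, max_lt hc₁ hc₂,
      fun q hq => (Finset.mem_union.1 hq).elim (hQ q) (hQ' q), ?_⟩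
    rintro P (hP | hP)
    · obtain ⟨q, hq, hle⟩ := h P hP
      exact ⟨q, Finset.mem_union_left _ hq, hle.trans (le_max_left _ _)⟩
    · obtain ⟨q, hq, hle⟩ := h' P hP
      exact ⟨q, Finset.mem_union_right _ hq, hle.trans (le_max_right _ _)⟩
  · intro P hP
    obtain ⟨q, hq, hpos, hlt⟩ :=
      exists_sum_mul_relEntropy_lt hW hq₀ hq₀_pos (hKc P hP).1 (hKc P hP).2
    obtain ⟨c', hc', hc'c⟩ := exists_between hlt
    have hcont : Continuous fun P : X → ℝ => ∑ x, P x * relEntropy (W x) q := by fun_prop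
    exact ⟨{P' | ∑ x, P' x * relEntropy (W x) q < c'},
      mem_nhdsWithin_of_mem_nhds ((isOpen_lt hcont continuous_const).mem_nhds hc'),
      {q}, c', hc'c, by simpa using ⟨hq, hpos⟩,
      fun P' hP' => ⟨q, Finset.mem_singleton_self q, le_of_lt hP'⟩⟩

lemma exists_finset_of_dispersion_ne {W : X → Y → ℝ} (hW : IsChannel W) (hsimple : Vmin W = Vmax W)
    {q₀ : Y → ℝ} (hq₀ : IsDist q₀) (hq₀_pos : ∀ y, 0 < q₀ y) {δ : ℝ} (hδ : 0 < δ) :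
    ∃ (Q : Finset (Y → ℝ)) (c : ℝ), c < capacity W ∧ (∀ q ∈ Q, IsDist q ∧ ∀ y, 0 < q y) ∧
      ∀ P : X → ℝ, IsDist P → δ ≤ |∑ x, P x * nu W x - Vmin W| →
        ∃ q ∈ Q, ∑ x, P x * relEntropy (W x) q ≤ c := by
  have hclosed : IsClosed {P : X → ℝ | δ ≤ |∑ x, P x * nu W x - Vmin W|} :=
    isClosed_le continuous_const (by fun_prop)
  obtain ⟨Q, c, hc, hQ, h⟩ := exists_finset_sum_mul_relEntropy_le hW hq₀ hq₀_pos
    ((isCompact_stdSimplex ℝ X).inter_right hclosed) (c := capacity W) fun P hP => ⟨hP.1,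
      (mutInfo_le_capacity hW hP.1).lt_of_ne fun heq => by
        have hδ' : δ ≤ |∑ x, P x * nu W x - Vmin W| := hP.2
        rw [dispersion_eq_Vmin hsimple ⟨hP.1, heq⟩, sub_self, abs_zero] at hδ'
        linarith⟩
  exact ⟨Q, c, hc, hQ, fun P hP hPδ => h P ⟨hP, hPδ⟩⟩

/-! ### The Gaussian distribution function -/

lemma gpdf_eq_gaussianPDFReal : gpdf = ProbabilityTheory.gaussianPDFReal 0 1 := by
  ext u
  simp [gpdf, ProbabilityTheory.gaussianPDFReal, neg_div]

lemma gpdf_pos (u : ℝ) : 0 < gpdf u := by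
  unfold gpdf
  positivity

lemma integrable_gpdf : Integrable gpdf :=
  gpdf_eq_gaussianPDFReal ▸ ProbabilityTheory.integrable_gaussianPDFReal 0 1

lemma continuous_gpdf : Continuous gpdf := by
  unfold gpdf
  fun_prop

lemma gcdf_eq_cdf : gcdf = ProbabilityTheory.cdf (ProbabilityTheory.gaussianReal 0 1) := by
  ext t
  rw [gcdf, ProbabilityTheory.cdf_eq_real, measureReal_def,
    ProbabilityTheory.gaussianReal_apply_eq_integral 0 one_ne_zero, ← gpdf_eq_gaussianPDFReal,
    ENNReal.toReal_ofReal (setIntegral_nonneg measurableSet_Iic fun u _ => (gpdf_pos u).le)]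

lemma gcdf_nonneg (x : ℝ) : 0 ≤ gcdf x :=
  gcdf_eq_cdf ▸ ProbabilityTheory.cdf_nonneg _ x

lemma gcdf_le_one (x : ℝ) : gcdf x ≤ 1 :=
  gcdf_eq_cdf ▸ ProbabilityTheory.cdf_le_one _ x

lemma tendsto_gcdf_atBot : Tendsto gcdf atBot (𝓝 0) :=
  gcdf_eq_cdf ▸ ProbabilityTheory.tendsto_cdf_atBot _

lemma tendsto_gcdf_atTop : Tendsto gcdf atTop (𝓝 1) :=
  gcdf_eq_cdf ▸ ProbabilityTheory.tendsto_cdf_atTop _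

lemma hasDerivAt_gcdf (x : ℝ) : HasDerivAt gcdf (gpdf x) x := by
  have hsplit : gcdf = fun u => gcdf 0 + ∫ t in (0 : ℝ)..u, gpdf t := by
    ext u
    rw [← intervalIntegral.integral_Iic_sub_Iic integrable_gpdf.integrableOn
      integrable_gpdf.integrableOn]
    exact (add_sub_cancel _ _).symm
  rw [hsplit]
  exact (intervalIntegral.integral_hasDerivAt_right integrable_gpdf.intervalIntegrable
    (continuous_gpdf.stronglyMeasurableAtFilter _ _) continuous_gpdf.continuousAt).const_add _

lemma continuous_gcdf : Continuous gcdf :=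
  continuous_iff_continuousAt.2 fun x => (hasDerivAt_gcdf x).continuousAt

lemma strictMono_gcdf : StrictMono gcdf :=
  strictMono_of_deriv_pos fun x => (hasDerivAt_gcdf x).deriv ▸ gpdf_pos x

lemma gcdf_gcdfInv {ε : ℝ} (hε₀ : 0 < ε) (hε₁ : ε < 1) : gcdf (gcdfInv ε) = ε := by
  obtain ⟨a, ha⟩ := (tendsto_gcdf_atBot.eventually_lt_const hε₀).exists
  obtain ⟨b, hb⟩ := (tendsto_gcdf_atTop.eventually_const_lt hε₁).exists
  exact Function.invFun_eq
    (mem_range_of_exists_le_of_exists_ge continuous_gcdf ⟨a, ha.le⟩ ⟨b, hb.le⟩)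

lemma hasDerivAt_gpdf (x : ℝ) : HasDerivAt gpdf (-x * gpdf x) x := by
  have hexponent : HasDerivAt (fun u : ℝ => -u ^ 2 / 2) (-x) x :=
    ((hasDerivAt_id x).pow 2).neg.div_const 2 |>.congr_deriv (by simp; ring)
  exact (hexponent.exp.const_mul (√(2 * π))⁻¹).congr_deriv (by unfold gpdf; ring)

lemma hasDerivAt_neg_mul_gpdf (x : ℝ) :
    HasDerivAt (fun x => -x * gpdf x) ((x ^ 2 - 1) * gpdf x) x :=
  ((hasDerivAt_id x).neg.mul (hasDerivAt_gpdf x)).congr_deriv (by simp; ring)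

lemma mul_gpdf_le_one (x : ℝ) : (1 + x ^ 2 / 2 + x ^ 4 / 8) * gpdf x ≤ 1 := by
  have hnorm : (√(2 * π))⁻¹ ≤ 1 :=
    inv_le_one_of_one_le₀ (one_le_sqrt.2 (by linarith [pi_gt_three]))
  have hquad : 1 + x ^ 2 / 2 + x ^ 4 / 8 ≤ exp (x ^ 2 / 2) :=
    le_trans (le_of_eq (by ring)) (quadratic_le_exp_of_nonneg (x := x ^ 2 / 2) (by positivity))
  calc (1 + x ^ 2 / 2 + x ^ 4 / 8) * gpdf x
      ≤ exp (x ^ 2 / 2) * (1 * exp (-x ^ 2 / 2)) := by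
        unfold gpdf
        gcongr
    _ = 1 := by rw [one_mul, ← exp_add, neg_div, add_neg_cancel, exp_zero]

lemma abs_mul_gpdf_le_two {x c : ℝ} (hc : |c| ≤ 2 * (1 + x ^ 2 / 2 + x ^ 4 / 8)) :
    |c * gpdf x| ≤ 2 := by
  rw [abs_mul, abs_of_pos (gpdf_pos x)]
  calc |c| * gpdf x ≤ 2 * (1 + x ^ 2 / 2 + x ^ 4 / 8) * gpdf x := by
        have := gpdf_pos x
        gcongr
    _ ≤ 2 := by linarith [mul_gpdf_le_one x]

lemma abs_sq_sub_one_mul_gpdf_le (x : ℝ) : |(x ^ 2 - 1) * gpdf x| ≤ 2 := by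
  refine abs_mul_gpdf_le_two (abs_le.2 ⟨?_, ?_⟩) <;> nlinarith [sq_nonneg x, sq_nonneg (x ^ 2)]

lemma abs_cubic_mul_gpdf_le (x : ℝ) : |(3 * x - x ^ 3) / 4 * gpdf x| ≤ 2 := by
  refine abs_mul_gpdf_le_two (abs_le.2 ⟨?_, ?_⟩) <;>
    nlinarith [sq_nonneg x, sq_nonneg (x ^ 2), sq_nonneg (x - 1), sq_nonneg (x + 1),
      sq_nonneg (x ^ 2 - x), sq_nonneg (x ^ 2 + x)]

/-! ### Taylor estimates -/

lemma abs_sub_le_of_abs_deriv_le {f f' : ℝ → ℝ} {K a b : ℝ} {n : ℕ} (hK : 0 ≤ K)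
    (hf : ∀ x ∈ uIcc a b, HasDerivAt f (f' x) x)
    (hf' : ∀ x ∈ uIcc a b, |f' x| ≤ K * |x - a| ^ n) :
    |f b - f a| ≤ K * |b - a| ^ (n + 1) := by
  have hbound : ∀ x ∈ uIcc a b, ‖f' x‖ ≤ K * |b - a| ^ n := fun x hx =>
    (hf' x hx).trans (by gcongr K * ?_ ^ n; exact abs_sub_left_of_mem_uIcc hx)
  have hmvt := Convex.norm_image_sub_le_of_norm_hasDerivWithin_le
    (fun x hx => (hf x hx).hasDerivWithinAt) hbound (convex_uIcc a b) left_mem_uIcc right_mem_uIcc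
  rwa [pow_succ, ← mul_assoc]

lemma abs_sub_taylor_one_le {f f' f'' : ℝ → ℝ} {K a b : ℝ}
    (hf : ∀ x ∈ uIcc a b, HasDerivAt f (f' x) x)
    (hf' : ∀ x ∈ uIcc a b, HasDerivAt f' (f'' x) x) (hf'' : ∀ x ∈ uIcc a b, |f'' x| ≤ K) :
    |f b - f a - (b - a) * f' a| ≤ K * |b - a| ^ 2 := by
  have hK : 0 ≤ K := (abs_nonneg _).trans (hf'' a left_mem_uIcc)
  have hfirst : ∀ x ∈ uIcc a b, |f' x - f' a| ≤ K * |x - a| ^ 1 := fun x hx => by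
    have hsub := uIcc_subset_uIcc_left hx
    exact abs_sub_le_of_abs_deriv_le (n := 0) hK (fun u hu => hf' u (hsub hu))
      fun u hu => by simpa using hf'' u (hsub hu)
  have hsecond := abs_sub_le_of_abs_deriv_le (n := 1) hK
    (fun x hx => (hf x hx).sub (((hasDerivAt_id x).sub_const a).mul_const (f' a)))
    (by simpa only [one_mul] using hfirst)
  calc |f b - f a - (b - a) * f' a| = _ := by
        congr 1
        simp only [Pi.sub_apply, id]
        ring
    _ ≤ _ := hsecond

lemma abs_sub_taylor_two_le {f f' f'' f''' : ℝ → ℝ} {K : ℝ}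
    (hf : ∀ x, HasDerivAt f (f' x) x) (hf' : ∀ x, HasDerivAt f' (f'' x) x)
    (hf'' : ∀ x, HasDerivAt f'' (f''' x) x) (hf''' : ∀ x, |f''' x| ≤ K) (a b : ℝ) :
    |f b - f a - (b - a) * f' a - (b - a) ^ 2 / 2 * f'' a| ≤ K * |b - a| ^ 3 := by
  have hK : 0 ≤ K := (abs_nonneg _).trans (hf''' a)
  have hquad : ∀ x, HasDerivAt (fun x => (x - a) ^ 2 / 2 * f'' a) ((x - a) * f'' a) x := fun x =>
    (((((hasDerivAt_id x).sub_const a).pow 2).div_const 2).mul_const (f'' a)).congr_deriv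
      (by simp)
  have hthird := abs_sub_le_of_abs_deriv_le (a := a) (b := b) (n := 2) hK
    (fun x _ => ((hf x).sub (((hasDerivAt_id x).sub_const a).mul_const (f' a))).sub (hquad x))
    (fun x _ => by
      simpa only [one_mul] using abs_sub_taylor_one_le (a := a) (b := x) (fun u _ => hf' u)
        (fun u _ => hf'' u) fun u _ => hf''' u)
  calc |f b - f a - (b - a) * f' a - (b - a) ^ 2 / 2 * f'' a| = _ := by
        congr 1
        simp only [Pi.sub_apply, id]
        ring
    _ ≤ _ := hthird

/-! ### The heat equation -/

/-- The solution `Φ(w / √s)` of the heat equation started from a step function: the chance that a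
Brownian motion with remaining time `s` ends below `w`. -/
def heat (s w : ℝ) : ℝ := gcdf (w / √s)

/-- The second derivative of `heat` in `w`, which by the heat equation is twice its derivative
in `s`. -/
def heatLaplacian (s w : ℝ) : ℝ := -(w / √s) * gpdf (w / √s) / s

/-- The error of one step of `heat_le_sum_heat`: a step of size `b` costs a third-order Taylor
remainder in space and a second-order one in time. -/
def heatStepError (s₀ b : ℝ) : ℝ := 2 * b ^ 3 / √s₀ ^ 3 + 2 * b ^ 4 / s₀ ^ 2

lemma heat_le_one (s w : ℝ) : heat s w ≤ 1 := gcdf_le_one _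

lemma abs_heat_sub_taylor_space_le {s : ℝ} (hs : 0 < s) (w x : ℝ) :
    |heat s (w - x) - heat s w + x * (gpdf (w / √s) / √s) - x ^ 2 / 2 * heatLaplacian s w| ≤
      2 * |x| ^ 3 / √s ^ 3 := by
  have hsqrt : 0 < √s := sqrt_pos.2 hs
  have htaylor := abs_sub_taylor_two_le hasDerivAt_gcdf hasDerivAt_gpdf hasDerivAt_neg_mul_gpdf
    abs_sq_sub_one_mul_gpdf_le (w / √s) ((w - x) / √s)
  have hstep : (w - x) / √s - w / √s = -(x / √s) := by ring
  rw [hstep, abs_neg, abs_div, abs_of_pos hsqrt] at htaylor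
  calc _ = |gcdf ((w - x) / √s) - gcdf (w / √s) - -(x / √s) * gpdf (w / √s) -
        (-(x / √s)) ^ 2 / 2 * (-(w / √s) * gpdf (w / √s))| := by
        rw [heat, heat, heatLaplacian, neg_sq, div_pow, sq_sqrt hs.le]
        congr 1
        ring
    _ ≤ 2 * (|x| / √s) ^ 3 := htaylor
    _ = 2 * |x| ^ 3 / √s ^ 3 := by ring

lemma hasDerivAt_div_sqrt (w : ℝ) {s : ℝ} (hs : 0 < s) :
    HasDerivAt (fun s => w / √s) (-(w / √s) / (2 * s)) s := by
  have hsqrt := sqrt_pos.2 hs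
  refine ((hasDerivAt_const s w).div (hasDerivAt_sqrt hs.ne') hsqrt.ne').congr_deriv ?_
  have hsq := sq_sqrt hs.le
  set r := √s
  rw [← hsq]
  field_simp
  ring

lemma hasDerivAt_heat (w : ℝ) {s : ℝ} (hs : 0 < s) :
    HasDerivAt (fun s => heat s w) (heatLaplacian s w / 2) s :=
  ((hasDerivAt_gcdf (w / √s)).comp s (hasDerivAt_div_sqrt w hs)).congr_deriv
    (by rw [heatLaplacian]; ring)

lemma hasDerivAt_heatLaplacian (w : ℝ) {s : ℝ} (hs : 0 < s) :
    HasDerivAt (fun s => heatLaplacian s w / 2)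
      ((3 * (w / √s) - (w / √s) ^ 3) / 4 * gpdf (w / √s) / s ^ 2) s := by
  have hprofile := (hasDerivAt_neg_mul_gpdf (w / √s)).comp s (hasDerivAt_div_sqrt w hs)
  refine ((hprofile.div (hasDerivAt_id s) hs.ne').div_const 2).congr_deriv ?_
  simp only [Function.comp, id]
  generalize w / √s = z
  field_simp
  ring

lemma abs_heat_sub_taylor_time_le {s t : ℝ} (hs : 0 < s) (hst : s ≤ t) (w : ℝ) :
    |heat t w - heat s w - (t - s) / 2 * heatLaplacian s w| ≤ 2 / s ^ 2 * (t - s) ^ 2 := by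
  have hmem : ∀ u ∈ uIcc s t, s ≤ u := fun u hu => (uIcc_of_le hst ▸ hu).1
  have htaylor := abs_sub_taylor_one_le (K := 2 / s ^ 2)
    (fun u hu => hasDerivAt_heat w (hs.trans_le (hmem u hu)))
    (fun u hu => hasDerivAt_heatLaplacian w (hs.trans_le (hmem u hu))) fun u hu => by
      rw [abs_div, abs_of_nonneg (sq_nonneg u)]
      have hcubic := abs_cubic_mul_gpdf_le (w / √u)
      have hsu := hmem u hu
      gcongr
  rw [sq_abs] at htaylor
  convert htaylor using 2
  ring

/- The first-order terms vanish because the increments are centred, and the second-order terms in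
space and time cancel by the heat equation. -/
lemma heat_le_sum_heat {s₀ b : ℝ} (hs₀ : 0 < s₀) {p ζ : Y → ℝ} (hp : IsDist p)
    (hmean : ∑ y, p y * ζ y = 0) (hb : ∀ y, |ζ y| ≤ b) {s w : ℝ}
    (hs : s₀ ≤ s - ∑ y, p y * ζ y ^ 2) :
    heat s w ≤ ∑ y, p y * heat (s - ∑ y, p y * ζ y ^ 2) (w - ζ y) + heatStepError s₀ b := by
  set v := ∑ y, p y * ζ y ^ 2 with hv
  set s' := s - v
  have hs' : 0 < s' := hs₀.trans_le hs
  have hv₀ : 0 ≤ v := Finset.sum_nonneg fun y _ => mul_nonneg (hp.1 y) (sq_nonneg _)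
  have hvb : v ≤ b ^ 2 := calc
    v ≤ ∑ y, p y * b ^ 2 := Finset.sum_le_sum fun y _ =>
        mul_le_mul_of_nonneg_left (sq_le_sq' (abs_le.1 (hb y)).1 (abs_le.1 (hb y)).2) (hp.1 y)
    _ = b ^ 2 := by rw [← Finset.sum_mul, hp.2, one_mul]
  have htime : heat s w ≤ heat s' w + v / 2 * heatLaplacian s' w + 2 * b ^ 4 / s₀ ^ 2 := by
    have htaylor := (abs_le.1 (abs_heat_sub_taylor_time_le hs' (sub_le_self s hv₀) w)).2
    have herror : 2 / s' ^ 2 * v ^ 2 ≤ 2 / s₀ ^ 2 * (b ^ 2) ^ 2 := by gcongr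
    rw [sub_sub_cancel] at htaylor
    linarith [show 2 / s₀ ^ 2 * (b ^ 2) ^ 2 = 2 * b ^ 4 / s₀ ^ 2 by ring]
  have hspace : ∀ y, heat s' w - ζ y * (gpdf (w / √s') / √s') + ζ y ^ 2 / 2 * heatLaplacian s' w -
      2 * b ^ 3 / √s₀ ^ 3 ≤ heat s' (w - ζ y) := fun y => by
    have htaylor := (abs_le.1 (abs_heat_sub_taylor_space_le hs' w (ζ y))).1
    have herror : 2 * |ζ y| ^ 3 / √s' ^ 3 ≤ 2 * b ^ 3 / √s₀ ^ 3 := by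
      have hb₀ := (abs_nonneg _).trans (hb y)
      gcongr
      exact hb y
    linarith
  have havg := Finset.sum_le_sum fun y (_ : y ∈ Finset.univ) =>
    mul_le_mul_of_nonneg_left (hspace y) (hp.1 y)
  have hterm : ∀ y, p y * (heat s' w - ζ y * (gpdf (w / √s') / √s') +
      ζ y ^ 2 / 2 * heatLaplacian s' w - 2 * b ^ 3 / √s₀ ^ 3) =
      p y * (heat s' w - 2 * b ^ 3 / √s₀ ^ 3) - p y * ζ y * (gpdf (w / √s') / √s') +
        p y * ζ y ^ 2 * (heatLaplacian s' w / 2) := fun y => by ring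
  simp_rw [hterm, Finset.sum_add_distrib, Finset.sum_sub_distrib, ← Finset.sum_mul, hp.2, hmean,
    ← hv] at havg
  rw [heatStepError]
  linarith

/-! ### Feedback paths -/

/-- The sum of `ψ x_k y_k` along an output sequence, the inputs `x_k` being chosen by the feedback
encoder `e` from the outputs before time `k`. -/
def pathSum (ψ : X → Y → ℝ) : (List Y → X) → List Y → ℝ
  | _, [] => 0
  | e, y :: l => ψ (e []) y + pathSum ψ (fun l' => e (y :: l')) l

/-- The likelihood of an output sequence under the feedback encoder `e`. -/
def pathLik (W : X → Y → ℝ) : (List Y → X) → List Y → ℝ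
  | _, [] => 1
  | e, y :: l => W (e []) y * pathLik W (fun l' => e (y :: l')) l

/-- The expectation of a function of the first `n` outputs under the feedback encoder `e`. -/
def pathExp (W : X → Y → ℝ) (n : ℕ) (e : List Y → X) (G : List Y → ℝ) : ℝ :=
  ∑ y : Fin n → Y, pathLik W e (List.ofFn y) * G (List.ofFn y)

/-- The probability of an event on the first `n` outputs under the feedback encoder `e`. -/
def pathProb (W : X → Y → ℝ) (n : ℕ) (e : List Y → X) (A : Set (List Y)) : ℝ :=
  pathExp W n e (A.indicator 1)

section PathSum

omit [Fintype X] [Fintype Y]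

lemma pathSum_add (ψ φ : X → Y → ℝ) (e : List Y → X) (l : List Y) :
    pathSum (fun x y => ψ x y + φ x y) e l = pathSum ψ e l + pathSum φ e l := by
  induction l generalizing e with
  | nil => simp [pathSum]
  | cons y l ih => rw [pathSum, ih, pathSum, pathSum, add_add_add_comm]

lemma pathSum_div (ψ : X → Y → ℝ) (c : ℝ) (e : List Y → X) (l : List Y) :
    pathSum (fun x y => ψ x y / c) e l = pathSum ψ e l / c := by
  induction l generalizing e with
  | nil => simp [pathSum]
  | cons y l ih => rw [pathSum, ih, pathSum, add_div]

lemma pathSum_const (c : ℝ) (e : List Y → X) (l : List Y) :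
    pathSum (fun _ _ => c) e l = l.length * c := by
  induction l generalizing e with
  | nil => simp [pathSum]
  | cons y l ih => rw [pathSum, ih, List.length_cons, Nat.cast_succ, add_one_mul, add_comm]

lemma pathSum_congr {ψ φ : X → Y → ℝ} {e : List Y → X} (h : ∀ l y, ψ (e l) y = φ (e l) y)
    (l : List Y) : pathSum ψ e l = pathSum φ e l := by
  induction l generalizing e with
  | nil => rfl
  | cons y l ih => exact congrArg₂ _ (h [] y) (ih fun l' => h (y :: l'))

lemma pathSum_mono {ψ φ : X → Y → ℝ} (h : ∀ x y, ψ x y ≤ φ x y) (e : List Y → X) (l : List Y) :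
    pathSum ψ e l ≤ pathSum φ e l := by
  induction l generalizing e with
  | nil => exact le_rfl
  | cons y l ih => exact add_le_add (h _ _) (ih _)

lemma pathSum_nonneg {ψ : X → Y → ℝ} (h : ∀ x y, 0 ≤ ψ x y) (e : List Y → X) (l : List Y) :
    0 ≤ pathSum ψ e l := by
  simpa [pathSum_const] using pathSum_mono h e l

lemma prod_take_eq_pathLik (W : X → Y → ℝ) {n : ℕ} (e : List Y → X) (y : Fin n → Y) :
    ∏ k : Fin n, W (e ((List.ofFn y).take k)) (y k) = pathLik W e (List.ofFn y) := by
  induction n generalizing e with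
  | zero => simp [pathLik]
  | succ n ih =>
    rw [Fin.prod_univ_succ, List.ofFn_succ, pathLik, ← ih]
    simp

lemma pathLik_nonneg {W : X → Y → ℝ} (hW : ∀ x y, 0 ≤ W x y) (e : List Y → X) (l : List Y) :
    0 ≤ pathLik W e l := by
  induction l generalizing e with
  | nil => exact zero_le_one
  | cons y l ih => exact mul_nonneg (hW _ _) (ih _)

lemma pathLik_eq_exp_mul_prod {W : X → Y → ℝ} (hW : ∀ x y, 0 ≤ W x y) {q : Y → ℝ}
    (hq : ∀ y, 0 < q y) {e : List Y → X} {l : List Y} (h : pathLik W e l ≠ 0) :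
    pathLik W e l = exp (pathSum (fun x y => log (W x y / q y)) e l) * (l.map q).prod := by
  induction l generalizing e with
  | nil => simp [pathLik, pathSum]
  | cons y l ih =>
    rw [pathLik] at h ⊢
    have hw := (hW (e []) y).lt_of_ne' (left_ne_zero_of_mul h)
    rw [ih (right_ne_zero_of_mul h), pathSum, exp_add, exp_log (div_pos hw (hq y)),
      List.map_cons, List.prod_cons]
    field_simp [(hq y).ne']

end PathSum

/-- The empirical distribution of the channel inputs along a path. -/
def inputType (e : List Y → X) (l : List Y) (x : X) : ℝ :=
  pathSum (fun x' _ => if x' = x then 1 else 0) e l / l.length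

section InputType

omit [Fintype Y]

lemma pathSum_eq_length_mul_sum_inputType (g : X → ℝ) (e : List Y → X) {l : List Y} (hl : l ≠ []) :
    pathSum (fun x _ => g x) e l = l.length * ∑ x, inputType e l x * g x := by
  have hcount : ∀ (e : List Y → X) (l : List Y), pathSum (fun x _ => g x) e l =
      ∑ x, pathSum (fun x' _ => if x' = x then 1 else 0) e l * g x := by
    intro e l
    induction l generalizing e with
    | nil => simp [pathSum]
    | cons y l ih => simp [pathSum, ih, add_mul, Finset.sum_add_distrib]
  have hlen : (l.length : ℝ) ≠ 0 := by simpa using hl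
  rw [hcount, Finset.mul_sum]
  refine Finset.sum_congr rfl fun x _ => ?_
  rw [inputType, ← mul_assoc, mul_div_cancel₀ _ hlen]

lemma isDist_inputType (e : List Y → X) {l : List Y} (hl : l ≠ []) : IsDist (inputType e l) := by
  have hlen : (l.length : ℝ) ≠ 0 := by simpa using hl
  refine ⟨fun x => div_nonneg (pathSum_nonneg (fun x _ => by split_ifs <;> norm_num) e l)
    (Nat.cast_nonneg _), ?_⟩
  have hsum := pathSum_eq_length_mul_sum_inputType (fun _ => 1) e hl
  rw [pathSum_const] at hsum
  simpa using (mul_left_cancel₀ hlen hsum).symm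

end InputType

section PathProb

omit [Fintype X]

lemma pathExp_zero (W : X → Y → ℝ) (e : List Y → X) (G : List Y → ℝ) :
    pathExp W 0 e G = G [] := by
  simp [pathExp, pathLik]

lemma pathExp_succ (W : X → Y → ℝ) (n : ℕ) (e : List Y → X) (G : List Y → ℝ) :
    pathExp W (n + 1) e G =
      ∑ y, W (e []) y * pathExp W n (fun l => e (y :: l)) (fun l => G (y :: l)) := by
  rw [pathExp, ← (Fin.consEquiv fun _ => Y).sum_comp, Fintype.sum_prod_type]
  simp [pathExp, Fin.consEquiv, List.ofFn_succ, pathLik, mul_assoc, Finset.mul_sum]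

lemma pathExp_mono {W : X → Y → ℝ} (hW : ∀ x y, 0 ≤ W x y) {n : ℕ} {e : List Y → X}
    {G H : List Y → ℝ} (h : ∀ l, l.length = n → pathLik W e l ≠ 0 → G l ≤ H l) :
    pathExp W n e G ≤ pathExp W n e H := by
  refine Finset.sum_le_sum fun y _ => ?_
  by_cases h0 : pathLik W e (List.ofFn y) = 0
  · simp [h0]
  · exact mul_le_mul_of_nonneg_left (h _ (by simp) h0) (pathLik_nonneg hW _ _)

lemma pathExp_const {W : X → Y → ℝ} (hW : ∀ x, ∑ y, W x y = 1) (n : ℕ) (e : List Y → X) (c : ℝ) :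
    pathExp W n e (fun _ => c) = c := by
  induction n generalizing e with
  | zero => exact pathExp_zero W e _
  | succ n ih => simp_rw [pathExp_succ, ih, ← Finset.sum_mul, hW, one_mul]

lemma pathExp_sub (W : X → Y → ℝ) (n : ℕ) (e : List Y → X) (G H : List Y → ℝ) :
    pathExp W n e (fun l => G l - H l) = pathExp W n e G - pathExp W n e H := by
  simp_rw [pathExp, mul_sub, Finset.sum_sub_distrib]

lemma pathExp_const_mul (W : X → Y → ℝ) (n : ℕ) (e : List Y → X) (c : ℝ) (G : List Y → ℝ) :
    pathExp W n e (fun l => c * G l) = c * pathExp W n e G := by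
  simp_rw [pathExp, Finset.mul_sum, mul_left_comm]

lemma pathProb_mono {W : X → Y → ℝ} (hW : ∀ x y, 0 ≤ W x y) {n : ℕ} {e : List Y → X}
    {A B : Set (List Y)} (h : ∀ l, l.length = n → pathLik W e l ≠ 0 → l ∈ A → l ∈ B) :
    pathProb W n e A ≤ pathProb W n e B := by
  refine pathExp_mono hW fun l hl hlik => ?_
  by_cases hA : l ∈ A
  · rw [indicator_of_mem hA, indicator_of_mem (h l hl hlik hA)]
  · rw [indicator_of_notMem hA]
    exact indicator_nonneg (fun _ _ => zero_le_one) l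

lemma pathProb_union_le {W : X → Y → ℝ} (hW : ∀ x y, 0 ≤ W x y) (n : ℕ) (e : List Y → X)
    (A B : Set (List Y)) : pathProb W n e (A ∪ B) ≤ pathProb W n e A + pathProb W n e B := by
  simp_rw [pathProb, pathExp, ← Finset.sum_add_distrib, ← mul_add]
  gcongr with y
  · exact pathLik_nonneg hW _ _
  · by_cases hA : List.ofFn y ∈ A <;> by_cases hB : List.ofFn y ∈ B <;> simp [hA, hB]

lemma pathProb_biUnion_le {ι : Type*} {W : X → Y → ℝ} (hW : ∀ x y, 0 ≤ W x y) (n : ℕ)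
    (e : List Y → X) (S : Finset ι) (A : ι → Set (List Y)) :
    pathProb W n e (⋃ i ∈ S, A i) ≤ ∑ i ∈ S, pathProb W n e (A i) := by
  induction S using Finset.induction_on with
  | empty => simp [pathProb, pathExp]
  | insert i S hi ih =>
    rw [Finset.set_biUnion_insert, Finset.sum_insert hi]
    exact (pathProb_union_le hW n e _ _).trans (add_le_add_right ih _)

/- The cross terms vanish since the increments are centred given the past. -/
lemma pathExp_add_pathSum_sq_le {W : X → Y → ℝ} (hW : IsChannel W) {ψ : X → Y → ℝ} {B : ℝ}
    (hmean : ∀ x, ∑ y, W x y * ψ x y = 0) (hB : ∀ x, ∑ y, W x y * ψ x y ^ 2 ≤ B)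
    (n : ℕ) (e : List Y → X) (a : ℝ) :
    pathExp W n e (fun l => (a + pathSum ψ e l) ^ 2) ≤ a ^ 2 + n * B := by
  induction n generalizing e a with
  | zero => simp [pathExp_zero, pathSum]
  | succ n ih =>
    rw [pathExp_succ]
    calc _ ≤ ∑ y, W (e []) y * ((a + ψ (e []) y) ^ 2 + n * B) := by
          refine Finset.sum_le_sum fun y _ => mul_le_mul_of_nonneg_left ?_ ((hW _).1 y)
          simpa only [pathSum, add_assoc] using ih (fun l => e (y :: l)) (a + ψ (e []) y)
      _ = (a ^ 2 + n * B) * ∑ y, W (e []) y + 2 * a * ∑ y, W (e []) y * ψ (e []) y +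
          ∑ y, W (e []) y * ψ (e []) y ^ 2 := by
          simp_rw [Finset.mul_sum, ← Finset.sum_add_distrib]
          exact Finset.sum_congr rfl fun y _ => by ring
      _ ≤ a ^ 2 + (n + 1 : ℕ) * B := by
          rw [(hW _).2, hmean]
          push_cast
          linarith [hB (e [])]

lemma pathProb_abs_pathSum_ge_le {W : X → Y → ℝ} (hW : IsChannel W) {ψ : X → Y → ℝ} {B : ℝ}
    (hmean : ∀ x, ∑ y, W x y * ψ x y = 0) (hB : ∀ x, ∑ y, W x y * ψ x y ^ 2 ≤ B)
    (n : ℕ) (e : List Y → X) {a : ℝ} (ha : 0 < a) :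
    pathProb W n e {l | a ≤ |pathSum ψ e l|} ≤ n * B / a ^ 2 := by
  have hmoment := pathExp_add_pathSum_sq_le hW hmean hB n e 0
  simp only [zero_add, zero_pow two_ne_zero] at hmoment
  rw [le_div_iff₀' (by positivity), pathProb, ← pathExp_const_mul]
  refine (pathExp_mono (fun x => (hW x).1) fun l _ _ => ?_).trans hmoment
  by_cases hl : a ≤ |pathSum ψ e l|
  · have hsq := pow_le_pow_left₀ ha.le hl 2
    rw [indicator_of_mem (show l ∈ {l | a ≤ |pathSum ψ e l|} from hl)]
    simpa using hsq
  · rw [indicator_of_notMem (show l ∉ {l | a ≤ |pathSum ψ e l|} from hl), mul_zero]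
    exact sq_nonneg _

end PathProb

/-! ### The smoothed tail bound -/

/-- The conditional second moment of an increment `ζ x Y` when the input is `x`. -/
def stepVar (W ζ : X → Y → ℝ) (x : X) : ℝ := ∑ y, W x y * ζ x y ^ 2

section SmoothedTail

omit [Fintype X]

lemma heat_le_pathExp {W : X → Y → ℝ} (hW : IsChannel W) {ζ : X → Y → ℝ} {s₀ b : ℝ}
    (hs₀ : 0 < s₀) (hb₀ : 0 ≤ b) (hmean : ∀ x, ∑ y, W x y * ζ x y = 0) (hb : ∀ x y, |ζ x y| ≤ b)
    (n : ℕ) (e : List Y → X) (s w : ℝ) :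
    heat s w ≤ pathExp W n e (fun l =>
      if s₀ ≤ s - pathSum (fun x _ => stepVar W ζ x) e l then
        heat (s - pathSum (fun x _ => stepVar W ζ x) e l) (w - pathSum ζ e l)
      else 1) + n * heatStepError s₀ b := by
  have hvar : ∀ x, 0 ≤ stepVar W ζ x := fun x =>
    Finset.sum_nonneg fun y _ => mul_nonneg ((hW x).1 y) (sq_nonneg _)
  have herror : 0 ≤ heatStepError s₀ b := by unfold heatStepError; positivity
  induction n generalizing e s w with
  | zero =>
    rw [pathExp_zero]
    split_ifs
    · simp [pathSum]
    · simpa using heat_le_one s w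
  | succ n ih =>
    rw [pathExp_succ]
    simp only [pathSum, ← sub_sub]
    push_cast
    by_cases hstep : s₀ ≤ s - stepVar W ζ (e [])
    · calc heat s w ≤ ∑ y, W (e []) y * heat (s - stepVar W ζ (e [])) (w - ζ (e []) y) +
            heatStepError s₀ b := heat_le_sum_heat hs₀ (hW _) (hmean _) (hb _) hstep
        _ ≤ ∑ y, W (e []) y * (pathExp W n (fun l => e (y :: l)) _ + n * heatStepError s₀ b) +
            heatStepError s₀ b := by
            gcongr with y
            · exact (hW _).1 y
            · exact ih (fun l => e (y :: l)) _ _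
        _ = _ := by
            simp_rw [mul_add, Finset.sum_add_distrib, ← Finset.sum_mul, (hW _).2]
            ring
    · have hexhausted : ∀ y l, ¬ s₀ ≤ s - stepVar W ζ (e []) -
          pathSum (fun x _ => stepVar W ζ x) (fun l' => e (y :: l')) l := fun y l h =>
        hstep (h.trans (sub_le_self _ (pathSum_nonneg (fun x _ => hvar x) _ _)))
      simp_rw [if_neg (hexhausted _ _), pathExp_const (fun x => (hW x).2), mul_one, (hW _).2]
      linarith [heat_le_one s w, mul_nonneg (Nat.cast_nonneg (α := ℝ) n) herror]

lemma pathProb_tail_le {W : X → Y → ℝ} (hW : IsChannel W) {ζ : X → Y → ℝ} {s₀ b : ℝ}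
    (hs₀ : 0 < s₀) (hb₀ : 0 ≤ b) (hmean : ∀ x, ∑ y, W x y * ζ x y = 0) (hb : ∀ x y, |ζ x y| ≤ b)
    (n : ℕ) (e : List Y → X) {lo hi u η : ℝ} (hη : 0 ≤ η) :
    pathProb W n e {l | u + η ≤ pathSum ζ e l ∧
        lo ≤ pathSum (fun x _ => stepVar W ζ x) e l ∧
        pathSum (fun x _ => stepVar W ζ x) e l ≤ hi} ≤
      1 - gcdf (u / √(hi + s₀)) + gcdf (-η / √(hi + s₀ - lo)) + n * heatStepError s₀ b := by
  set V := pathSum (fun x _ => stepVar W ζ x) e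
  set A := {l | u + η ≤ pathSum ζ e l ∧ lo ≤ V l ∧ V l ≤ hi}
  set κ := gcdf (-η / √(hi + s₀ - lo))
  have hheat := heat_le_pathExp hW hs₀ hb₀ hmean hb n e (hi + s₀) u
  have hbound : pathExp W n e (fun l =>
      if s₀ ≤ hi + s₀ - V l then heat (hi + s₀ - V l) (u - pathSum ζ e l) else 1) ≤
      pathExp W n e (fun l => 1 + κ - A.indicator 1 l) := by
    refine pathExp_mono (fun x => (hW x).1) fun l _ _ => ?_
    by_cases hl : l ∈ A
    · obtain ⟨htail, hlo, hhi⟩ := hl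
      rw [if_pos (by linarith), indicator_of_mem (show l ∈ A from ⟨htail, hlo, hhi⟩), Pi.one_apply,
        add_sub_cancel_left, heat]
      refine strictMono_gcdf.monotone ?_
      have hpos : 0 < √(hi + s₀ - V l) := sqrt_pos.2 (by linarith)
      calc _ ≤ -η / √(hi + s₀ - V l) := by
            gcongr
            linarith
        _ ≤ -η / √(hi + s₀ - lo) := by
            rw [neg_div, neg_div, neg_le_neg_iff]
            gcongr
    · have hκ : 0 ≤ κ := gcdf_nonneg _
      rw [indicator_of_notMem hl]
      split_ifs
      · linarith [heat_le_one (hi + s₀ - V l) (u - pathSum ζ e l)]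
      · linarith
  rw [pathExp_sub, pathExp_const fun x => (hW x).2] at hbound
  rw [pathProb]
  rw [heat] at hheat
  linarith

end SmoothedTail

/-! ### The converse -/

/-- The likelihood of an output sequence under the uniform mixture of the memoryless laws in `Q`. -/
def iidMixture (Q : Finset (Y → ℝ)) (l : List Y) : ℝ := (∑ q ∈ Q, (l.map q).prod) / Q.card

omit [Fintype Y] in
lemma iidMixture_nonneg {Q : Finset (Y → ℝ)} (hQ : ∀ q ∈ Q, ∀ y, 0 ≤ q y) (l : List Y) :
    0 ≤ iidMixture Q l :=
  div_nonneg (Finset.sum_nonneg fun q hq => List.prod_nonneg fun _ hr => by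
    obtain ⟨y, _, rfl⟩ := List.mem_map.1 hr
    exact hQ q hq y) (Nat.cast_nonneg _)

lemma sum_prod_eq_one {n : ℕ} {f : Fin n → Y → ℝ} (hf : ∀ k, ∑ y, f k y = 1) :
    ∑ y : Fin n → Y, ∏ k, f k (y k) = 1 := by
  rw [← Fintype.piFinset_univ, ← Finset.prod_univ_sum]
  simp [hf]

lemma sum_iidMixture {Q : Finset (Y → ℝ)} (hne : Q.Nonempty) (hQ : ∀ q ∈ Q, ∑ y, q y = 1)
    (n : ℕ) : ∑ y : Fin n → Y, iidMixture Q (List.ofFn y) = 1 := by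
  have hcard : (Q.card : ℝ) ≠ 0 := Nat.cast_ne_zero.2 hne.card_ne_zero
  have hprod : ∀ q ∈ Q, ∑ y : Fin n → Y, ((List.ofFn y).map q).prod = 1 := fun q hq => by
    simp_rw [List.map_ofFn, List.prod_ofFn, Function.comp]
    exact sum_prod_eq_one fun _ => hQ q hq
  simp_rw [iidMixture, ← Finset.sum_div]
  rw [Finset.sum_comm, Finset.sum_congr rfl hprod]
  simp [hcard]

omit [Fintype X] [Fintype Y] in
lemma lt_pathSum_log_of_iidMixture_lt {W : X → Y → ℝ} (hW : ∀ x y, 0 ≤ W x y)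
    {Q : Finset (Y → ℝ)} (hQ : ∀ q ∈ Q, ∀ y, 0 < q y) {e : List Y → X} {l : List Y}
    (hlik : pathLik W e l ≠ 0) {a : ℝ} (h : exp a * iidMixture Q l < pathLik W e l)
    {q : Y → ℝ} (hq : q ∈ Q) :
    a - log Q.card < pathSum (fun x y => log (W x y / q y)) e l := by
  have hprod : ∀ q ∈ Q, 0 < (l.map q).prod := fun q hq => List.prod_pos fun r hr => by
    obtain ⟨y, _, rfl⟩ := List.mem_map.1 hr
    exact hQ q hq y
  have hcard : (0 : ℝ) < Q.card := Nat.cast_pos.2 (Finset.card_pos.2 ⟨q, hq⟩)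
  have hcomponent : (l.map q).prod / Q.card ≤ iidMixture Q l := by
    unfold iidMixture
    gcongr
    exact Finset.single_le_sum (f := fun q : Y → ℝ => (l.map q).prod)
      (fun q hq => (hprod q hq).le) hq
  refine exp_lt_exp.1 (lt_of_mul_lt_mul_right ?_ (hprod q hq).le)
  calc exp (a - log Q.card) * (l.map q).prod = exp a * ((l.map q).prod / Q.card) := by
        rw [exp_sub, exp_log hcard]
        ring
    _ ≤ exp a * iidMixture Q l := by gcongr
    _ < pathLik W e l := h
    _ = _ := pathLik_eq_exp_mul_prod hW (hQ q hq) hlik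

omit [Fintype X] in
lemma pathSum_log_div_eq_add (W : X → Y → ℝ) (q : Y → ℝ) (e : List Y → X) (l : List Y) :
    pathSum (fun x y => log (W x y / q y)) e l =
      pathSum (fun x => centredDensity (W x) q) e l +
        pathSum (fun x _ => relEntropy (W x) q) e l := by
  simp_rw [← pathSum_add, centredDensity, sub_add_cancel]

/- Either the input type is far from the dispersion `V`, and some `q ∈ Q` makes the path unlikely,
or it is close to it, and the comparison with `q₀` bounds the path. -/
lemma exists_le_abs_pathSum_or_of_iidMixture_lt {W : X → Y → ℝ} (hW : ∀ x y, 0 ≤ W x y)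
    {q₀ : Y → ℝ} (hq₀ : ∀ y, 0 < q₀ y) {C : ℝ} (hC : ∀ x, relEntropy (W x) q₀ ≤ C)
    {Q : Finset (Y → ℝ)} (hQ : ∀ q ∈ Q, ∀ y, 0 < q y) {g : X → ℝ} {V δ c : ℝ}
    (hfar : ∀ P, IsDist P → δ ≤ |∑ x, P x * g x - V| →
      ∃ q ∈ Q, ∑ x, P x * relEntropy (W x) q ≤ c)
    {e : List Y → X} {l : List Y} (hl : l ≠ []) (hlik : pathLik W e l ≠ 0) {a : ℝ}
    (h : exp (l.length * C + a) * iidMixture (insert q₀ Q) l < pathLik W e l) :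
    (∃ q ∈ Q, l.length * (C - c) + (a - log (insert q₀ Q).card) ≤
        |pathSum (fun x => centredDensity (W x) q) e l|) ∨
      a - log (insert q₀ Q).card ≤ pathSum (fun x => centredDensity (W x) q₀) e l ∧
        |pathSum (fun x _ => g x) e l - l.length * V| < l.length * δ := by
  have hlarge := fun {q} => lt_pathSum_log_of_iidMixture_lt (q := q) hW
    (Finset.forall_mem_insert _ _ _ |>.2 ⟨hq₀, hQ⟩) hlik h
  have hlen : (0 : ℝ) < l.length := Nat.cast_pos.2 (List.length_pos_iff.2 hl)
  by_cases htype : δ ≤ |∑ x, inputType e l x * g x - V|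
  · obtain ⟨q, hq, hcost⟩ := hfar _ (isDist_inputType e hl) htype
    have hpath := hlarge (Finset.mem_insert_of_mem hq)
    rw [pathSum_log_div_eq_add, pathSum_eq_length_mul_sum_inputType _ e hl] at hpath
    refine .inl ⟨q, hq, ?_⟩
    linarith [mul_le_mul_of_nonneg_left hcost hlen.le,
      le_abs_self (pathSum (fun x => centredDensity (W x) q) e l)]
  · have hpath := hlarge (Finset.mem_insert_self _ _)
    have hcost := pathSum_mono (φ := fun _ _ => C) (fun x _ => hC x) e l
    rw [pathSum_log_div_eq_add] at hpath
    rw [pathSum_const] at hcost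
    refine .inr ⟨by linarith, ?_⟩
    rw [pathSum_eq_length_mul_sum_inputType g e hl, ← mul_sub, abs_mul, abs_of_pos hlen]
    exact mul_lt_mul_of_pos_left (not_le.1 htype) hlen

lemma tendsto_sqrt_natCast_atTop : Tendsto (fun n : ℕ => √(n : ℝ)) atTop atTop :=
  tendsto_sqrt_atTop.comp tendsto_natCast_atTop_atTop

lemma tendsto_natCast_mul_heatStepError (s₀ B : ℝ) :
    Tendsto (fun n : ℕ => n * heatStepError s₀ (B / √n)) atTop (𝓝 0) := by
  have hinv : Tendsto (fun n : ℕ => (√(n : ℝ))⁻¹) atTop (𝓝 0) :=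
    tendsto_inv_atTop_zero.comp tendsto_sqrt_natCast_atTop
  have hlim := (hinv.const_mul (2 * B ^ 3 / √s₀ ^ 3)).add
    ((hinv.pow 2).const_mul (2 * B ^ 4 / s₀ ^ 2))
  rw [mul_zero, zero_pow two_ne_zero, mul_zero, add_zero] at hlim
  refine hlim.congr' ?_
  filter_upwards [eventually_gt_atTop 0] with n hn
  have hpos : 0 < √(n : ℝ) := sqrt_pos.2 (Nat.cast_pos.2 hn)
  rw [heatStepError, ← sq_sqrt (Nat.cast_nonneg (α := ℝ) n)]
  simp only [sqrt_sq hpos.le]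
  field_simp

omit [Fintype X] in
lemma eventually_pathProb_typical_le [Finite X] {W : X → Y → ℝ} (hW : IsChannel W)
    {ξ : X → Y → ℝ} (hmean : ∀ x, ∑ y, W x y * ξ x y = 0) (V u : ℝ) {δ η κ : ℝ} (hδ : 0 < δ)
    (hη : 0 ≤ η) (hκ : 0 < κ) :
    ∀ᶠ n : ℕ in atTop, ∀ e, pathProb W n e {l | (u + η) * √n ≤ pathSum ξ e l ∧
        |pathSum (fun x _ => stepVar W ξ x) e l - n * V| < n * δ} ≤
      1 - gcdf (u / √(V + 2 * δ)) + gcdf (-η / √(3 * δ)) + κ := by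
  obtain ⟨B, hB⟩ := Finite.exists_le fun p : X × Y => |ξ p.1 p.2|
  filter_upwards [(tendsto_natCast_mul_heatStepError δ |B|).eventually_lt_const hκ,
    eventually_gt_atTop 0] with n hsmall hn e
  have hn : (0 : ℝ) < n := Nat.cast_pos.2 hn
  have hscaled : ∀ x, stepVar W (fun x y => ξ x y / √n) x = stepVar W ξ x / n := fun x => by
    simp_rw [stepVar, div_pow, sq_sqrt hn.le, Finset.sum_div, mul_div_assoc]
  have htail := pathProb_tail_le hW (ζ := fun x y => ξ x y / √n) (lo := V - δ) (hi := V + δ)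
    (u := u) hδ (div_nonneg (abs_nonneg B) (sqrt_nonneg n))
    (fun x => by simp_rw [← mul_div_assoc, ← Finset.sum_div, hmean, zero_div])
    (fun x y => by
      rw [abs_div, abs_of_nonneg (sqrt_nonneg _)]
      exact div_le_div_of_nonneg_right ((hB (x, y)).trans (le_abs_self B)) (sqrt_nonneg _)) n e hη
  rw [show V + δ + δ = V + 2 * δ by ring, show V + 2 * δ - (V - δ) = 3 * δ by ring] at htail
  refine (pathProb_mono (fun x => (hW x).1) fun l _ _ hl => ?_).trans
    (htail.trans (by linarith))
  obtain ⟨hlarge, hvar⟩ := hl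
  simp only [hscaled, pathSum_div, mem_ofPred_eq]
  rw [abs_lt] at hvar
  rw [le_div_iff₀ (sqrt_pos.2 hn), le_div_iff₀ hn, div_le_iff₀ hn]
  exact ⟨hlarge, by linarith, by linarith⟩

omit [Fintype X] in
lemma eventually_pathProb_exists_abs_pathSum_ge_le [Finite X] {ι : Type*} {W : X → Y → ℝ}
    (hW : IsChannel W) (S : Finset ι) {ψ : ι → X → Y → ℝ}
    (hmean : ∀ i x, ∑ y, W x y * ψ i x y = 0) {a κ : ℝ} (ha : 0 < a) (hκ : 0 < κ) :
    ∀ᶠ n : ℕ in atTop, ∀ e,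
      pathProb W n e {l | ∃ i ∈ S, n * a ≤ |pathSum (ψ i) e l|} ≤ κ := by
  obtain ⟨B, hB⟩ := Finite.exists_le fun p : S × X => stepVar W (ψ p.1) p.2
  have hlim : Tendsto (fun n : ℕ => S.card * (B / a ^ 2) / (n : ℝ)) atTop (𝓝 0) :=
    tendsto_natCast_atTop_atTop.const_div_atTop _
  filter_upwards [hlim.eventually_le_const hκ, eventually_ne_atTop 0] with n hsmall hn e
  calc pathProb W n e {l | ∃ i ∈ S, n * a ≤ |pathSum (ψ i) e l|}
      = pathProb W n e (⋃ i ∈ S, {l | n * a ≤ |pathSum (ψ i) e l|}) := by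
        congr 1
        ext l
        simp
    _ ≤ ∑ i ∈ S, pathProb W n e {l | n * a ≤ |pathSum (ψ i) e l|} :=
        pathProb_biUnion_le (fun x => (hW x).1) n e S _
    _ ≤ S.card • (n * B / (n * a) ^ 2) := Finset.sum_le_card_nsmul _ _ _ fun _ hi =>
        pathProb_abs_pathSum_ge_le hW (hmean _) (fun x => hB (⟨_, hi⟩, x)) n e
          (mul_pos (Nat.cast_pos.2 (Nat.pos_of_ne_zero hn)) ha)
    _ = S.card * (B / a ^ 2) / n := by
        rw [nsmul_eq_mul]
        field_simp
    _ ≤ κ := hsmall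

lemma tendsto_gcdf_neg_div_sqrt {η : ℝ} (hη : 0 < η) :
    Tendsto (fun δ => gcdf (-η / √(3 * δ))) (𝓝[>] 0) (𝓝 0) := by
  have hsqrt : Tendsto (fun δ => √(3 * δ)) (𝓝[>] 0) (𝓝[>] 0) := by
    refine tendsto_nhdsWithin_iff.2 ⟨?_, ?_⟩
    · have hcont : Continuous fun δ : ℝ => √(3 * δ) := by fun_prop
      simpa using (hcont.tendsto 0).mono_left (nhdsWithin_le_nhds (s := Ioi 0))
    · filter_upwards [self_mem_nhdsWithin] with δ (hδ : 0 < δ)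
      exact sqrt_pos.2 (by positivity)
  simp_rw [div_eq_mul_inv]
  exact tendsto_gcdf_atBot.comp
    ((tendsto_inv_nhdsGT_zero.comp hsqrt).const_mul_atTop_of_neg (neg_lt_zero.2 hη))

lemma exists_lt_gcdf_sub_gcdf {V t ε : ℝ} (hV : 0 < V) (hε : ε < gcdf (t / √V)) :
    ∃ η > 0, ∃ δ > 0, ε < gcdf ((t - 2 * η) / √(V + 2 * δ)) - gcdf (-η / √(3 * δ)) := by
  have hsqrt : √V ≠ 0 := (sqrt_pos.2 hV).ne'
  have hη : ∀ᶠ η in 𝓝[>] (0 : ℝ), ε < gcdf ((t - 2 * η) / √V) := by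
    have hcont : Continuous fun η : ℝ => gcdf ((t - 2 * η) / √V) :=
      continuous_gcdf.comp (by fun_prop)
    exact ((hcont.tendsto' 0 (gcdf (t / √V)) (by simp)).eventually_const_lt hε).filter_mono
      nhdsWithin_le_nhds
  obtain ⟨η, hη, hη₀ : 0 < η⟩ := (hη.and self_mem_nhdsWithin).exists
  have hcont : ContinuousAt (fun δ : ℝ => gcdf ((t - 2 * η) / √(V + 2 * δ))) 0 :=
    continuous_gcdf.continuousAt.comp
      (ContinuousAt.div (by fun_prop) (by fun_prop) (by simpa using hsqrt))
  have hlim := (hcont.tendsto.mono_left (nhdsWithin_le_nhds (s := Ioi 0))).sub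
    (tendsto_gcdf_neg_div_sqrt hη₀)
  obtain ⟨δ, hδ, hδ₀ : 0 < δ⟩ :=
    ((hlim.eventually_const_lt (by simpa using hη)).and self_mem_nhdsWithin).exists
  exact ⟨η, hη₀, δ, hδ₀, hδ⟩

lemma exists_finset_eventually_pathProb_iidMixture_lt_le {W : X → Y → ℝ} (hW : IsChannel W)
    (hcol : NoZeroColumn W) (hVmin : 0 < Vmin W) (hsimple : Vmin W = Vmax W) {t ε : ℝ}
    (hε : ε < gcdf (t / √(Vmin W))) :
    ∃ Q : Finset (Y → ℝ), Q.Nonempty ∧ (∀ q ∈ Q, IsDist q) ∧ ∃ δ < 1 - ε, ∀ᶠ n : ℕ in atTop,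
      ∀ e, pathProb W n e {l | exp (n * capacity W + t * √n) * iidMixture Q l < pathLik W e l} ≤
        δ := by
  obtain ⟨P, hP, hqStar⟩ := exists_mem_capacityAchievers_qStar_eq
    (capacityAchievers_nonempty hVmin.ne')
  have hq₀_pos : ∀ y, 0 < qStar W y := hqStar ▸ outDist_pos_of_mem_capacityAchievers hW hcol hP
  have hq₀ : IsDist (qStar W) := hqStar ▸ isDist_outDist hP.1 hW
  have hC : ∀ x, relEntropy (W x) (qStar W) ≤ capacity W := fun x =>
    hqStar ▸ relEntropy_outDist_le_capacity hW hP (hqStar ▸ hq₀_pos) x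
  obtain ⟨η, hη, δ, hδ, hgap⟩ := exists_lt_gcdf_sub_gcdf hVmin hε
  obtain ⟨Q, c, hc, hQ, hfar⟩ := exists_finset_of_dispersion_ne hW hsimple hq₀ hq₀_pos hδ
  obtain ⟨κ, hκ, hgap⟩ : ∃ κ > 0, ε + 3 * κ < gcdf ((t - 2 * η) / √(Vmin W + 2 * δ)) -
      gcdf (-η / √(3 * δ)) := ⟨_, div_pos (sub_pos.2 hgap) four_pos, by linarith⟩
  have hmean : ∀ q x, ∑ y, W x y * centredDensity (W x) q y = 0 := fun q x =>
    sum_mul_centredDensity (hW x).2 q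
  refine ⟨insert (qStar W) Q, Finset.insert_nonempty _ _,
    (Finset.forall_mem_insert _ _ _).2 ⟨hq₀, fun q hq => (hQ q hq).1⟩, 1 - ε - κ, by linarith, ?_⟩
  filter_upwards [eventually_pathProb_typical_le hW (hmean (qStar W)) (Vmin W) (t - 2 * η) hδ hη.le
      hκ, eventually_pathProb_exists_abs_pathSum_ge_le hW Q hmean
      (half_pos (sub_pos.2 hc)) hκ,
    tendsto_sqrt_natCast_atTop.eventually_ge_atTop (log (insert (qStar W) Q).card / η),
    tendsto_sqrt_natCast_atTop.eventually_ge_atTop ((η - t) / ((capacity W - c) / 2)),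
    eventually_gt_atTop 0] with n htypical hatypical hlog hrate hn e
  rw [div_le_iff₀ hη] at hlog
  rw [div_le_iff₀ (half_pos (sub_pos.2 hc))] at hrate
  have hsq : √(n : ℝ) * √n = n := mul_self_sqrt n.cast_nonneg
  have hrate := mul_le_mul_of_nonneg_right hrate (sqrt_nonneg n)
  refine (pathProb_mono (fun x => (hW x).1) fun l hl hlik h => ?_).trans
    ((pathProb_union_le (fun x => (hW x).1) n e _ _).trans
      ((add_le_add (hatypical e) (htypical e)).trans (by linarith)))
  subst hl
  rcases exists_le_abs_pathSum_or_of_iidMixture_lt (fun x => (hW x).1) hq₀_pos hC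
    (fun q hq => (hQ q hq).2) hfar (List.length_pos_iff.1 hn) hlik h with
    ⟨q, hq, hfar⟩ | ⟨hlarge, hnear⟩
  · refine .inl ⟨q, hq, le_trans ?_ hfar⟩
    nlinarith
  · refine .inr ⟨by linarith, ?_⟩
    simp_rw [nu_eq_relEntropyVar hW] at hnear
    exact hnear

omit [Fintype X] in
/- A message decoded correctly outside the event `a * μ < pathLik` is bounded by `a * μ`, and the
decoding regions are disjoint. -/
lemma le_errProb {W : X → Y → ℝ} (hW : IsChannel W) {n M : ℕ} (hM : 0 < M) {a δ : ℝ} (ha : 0 ≤ a)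
    {μ : List Y → ℝ} (hμ : ∀ l, 0 ≤ μ l) (hμ_sum : ∑ y : Fin n → Y, μ (List.ofFn y) ≤ 1)
    (h : ∀ e : List Y → X, pathProb W n e {l | a * μ l < pathLik W e l} ≤ δ)
    (enc : Fin M → List Y → X) (dec : (Fin n → Y) → Fin M) :
    1 - δ - a / M ≤ errProb W n M enc dec := by
  have hM₀ : (0 : ℝ) < M := Nat.cast_pos.2 hM
  set E : Fin M → Set (List Y) := fun m => {l | a * μ l < pathLik W (enc m) l}
  have hterm : ∀ (m : Fin M) (y : Fin n → Y), pathLik W (enc m) (List.ofFn y) -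
      pathLik W (enc m) (List.ofFn y) * (E m).indicator 1 (List.ofFn y) -
        a * (if dec y = m then μ (List.ofFn y) else 0) ≤
      pathLik W (enc m) (List.ofFn y) * (if dec y = m then 0 else 1) := fun m y => by
    have hlik := pathLik_nonneg (fun x => (hW x).1) (enc m) (List.ofFn y)
    have hcap := mul_nonneg ha (hμ (List.ofFn y))
    by_cases hE : List.ofFn y ∈ E m
    · rw [indicator_of_mem hE]
      split_ifs <;> simp <;> linarith
    · have hsmall : pathLik W (enc m) (List.ofFn y) ≤ a * μ (List.ofFn y) := not_lt.1 hE
      rw [indicator_of_notMem hE]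
      split_ifs
      · simpa using hsmall
      · simp
  have hcorrect : ∑ m : Fin M, ∑ y : Fin n → Y,
      a * (if dec y = m then μ (List.ofFn y) else 0) ≤ a := by
    rw [Finset.sum_comm]
    simpa [← Finset.mul_sum] using mul_le_of_le_one_right ha hμ_sum
  have htotal := Finset.sum_le_sum fun m (_ : m ∈ Finset.univ) =>
    Finset.sum_le_sum fun y (_ : y ∈ Finset.univ) => hterm m y
  have hpaths : ∀ m, ∑ y : Fin n → Y, pathLik W (enc m) (List.ofFn y) = 1 := fun m => by
    simpa [pathExp] using pathExp_const (fun x => (hW x).2) n (enc m) 1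
  have hevents : ∑ m, pathProb W n (enc m) (E m) ≤ M * δ := by
    simpa using Finset.sum_le_sum fun m (_ : m ∈ Finset.univ) => h (enc m)
  simp_rw [Finset.sum_sub_distrib, hpaths] at htotal
  simp_rw [errProb, prod_take_eq_pathLik]
  simp_rw [pathProb, pathExp] at hevents
  simp only [Finset.sum_const, Finset.card_univ, Fintype.card_fin, nsmul_eq_mul] at htotal
  rw [inv_mul_eq_div, le_div_iff₀ hM₀, sub_mul, div_mul_cancel₀ _ hM₀.ne']
  linarith

omit [Fintype X] in
lemma le_minErr [Nonempty X] {W : X → Y → ℝ} {n : ℕ} {R b : ℝ}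
    (h : ∀ enc dec, b ≤ errProb W n ⌈exp (n * R)⌉₊ enc dec) : b ≤ minErr W n R := by
  have : NeZero ⌈exp (n * R)⌉₊ := ⟨(Nat.ceil_pos.2 (exp_pos _)).ne'⟩
  refine le_csInf ⟨_, fun _ _ => Classical.arbitrary X, fun _ => 0, rfl⟩ ?_
  rintro _ ⟨enc, dec, rfl⟩
  exact h enc dec

lemma nonempty_of_Vmin_ne_zero {W : X → Y → ℝ} (hVmin : Vmin W ≠ 0) : Nonempty X := by
  obtain ⟨P, hP, -⟩ := capacityAchievers_nonempty hVmin
  by_contra hempty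
  have := not_nonempty_iff.1 hempty
  simpa using hP.2

lemma eventually_ceil_exp_le_of_minErr_le {W : X → Y → ℝ} (hW : IsChannel W)
    (hcol : NoZeroColumn W) (hVmin : 0 < Vmin W) (hsimple : Vmin W = Vmax W) {ε : ℝ}
    (hε₀ : 0 < ε) (hε₁ : ε < 1) {a : ℝ} (ha : √(Vmin W) * gcdfInv ε < a) :
    ∀ᶠ n : ℕ in atTop, ∀ R : ℝ, minErr W n R ≤ ε →
      (⌈exp (n * R)⌉₊ : ℝ) ≤ exp (n * capacity W + a * √n) := by
  have := nonempty_of_Vmin_ne_zero hVmin.ne'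
  obtain ⟨t, hat, hta⟩ := exists_between ha
  have hεt : ε < gcdf (t / √(Vmin W)) := by
    rw [← gcdf_gcdfInv hε₀ hε₁]
    exact strictMono_gcdf ((lt_div_iff₀' (sqrt_pos.2 hVmin)).2 hat)
  obtain ⟨Q, hQne, hQ, δ, hδ, hpath⟩ :=
    exists_finset_eventually_pathProb_iidMixture_lt_le hW hcol hVmin hsimple hεt
  have hexp : Tendsto (fun n : ℕ => exp ((t - a) * √n)) atTop (𝓝 0) :=
    tendsto_exp_atBot.comp
      (tendsto_sqrt_natCast_atTop.const_mul_atTop_of_neg (sub_neg.2 hta))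
  filter_upwards [hpath, hexp.eventually_lt_const (show 0 < 1 - ε - δ by linarith)]
    with n hn hsmall R hR
  by_contra! hlarge
  have herr : 1 - δ - exp (n * capacity W + t * √n) / ⌈exp (n * R)⌉₊ ≤ minErr W n R :=
    le_minErr fun enc dec => le_errProb hW (Nat.ceil_pos.2 (exp_pos _)) (exp_pos _).le
      (iidMixture_nonneg fun q hq => (hQ q hq).1)
      (sum_iidMixture hQne (fun q hq => (hQ q hq).2) n).le hn enc dec
  have hratio : exp (n * capacity W + t * √n) / ⌈exp (n * R)⌉₊ ≤ exp ((t - a) * √n) := by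
    rw [div_le_iff₀ ((exp_pos _).trans hlarge)]
    calc exp (n * capacity W + t * √n)
        = exp ((t - a) * √n) * exp (n * capacity W + a * √n) := by
          rw [← exp_add]
          ring_nf
      _ ≤ exp ((t - a) * √n) * ⌈exp (n * R)⌉₊ := by gcongr
  linarith

/-! ### Achievability -/

/-- The outputs whose likelihood under the input `x` is at least `γ` times their output probability:
the candidates for the decoding region of the codeword `x` in Feinstein's construction. -/
def thresholdSet (P : X → ℝ) (W : X → Y → ℝ) (γ : ℝ) (x : X) : Finset Y :=
  Finset.univ.filter fun y => γ * outDist P W y ≤ W x y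

section Feinstein

lemma sum_outDist_le_one_div {W : X → Y → ℝ} (hW : IsChannel W) {P : X → ℝ} {γ : ℝ} (hγ : 0 < γ)
    {x : X} {D : Finset Y} (hD : D ⊆ thresholdSet P W γ x) :
    ∑ y ∈ D, outDist P W y ≤ 1 / γ := by
  rw [le_div_iff₀' hγ, Finset.mul_sum]
  calc ∑ y ∈ D, γ * outDist P W y ≤ ∑ y ∈ D, W x y :=
        Finset.sum_le_sum fun y hy => (Finset.mem_filter.1 (hD hy)).2
    _ ≤ ∑ y, W x y := Finset.sum_le_univ_sum_of_nonneg (hW x).1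
    _ = 1 := (hW x).2

omit [Fintype Y] in
lemma exists_le_sum_sdiff {W : X → Y → ℝ} (hW : ∀ x y, 0 ≤ W x y) {P : X → ℝ} (hP : IsDist P)
    {T : X → Finset Y} {U : Finset Y} {s : ℝ}
    (h : s + ∑ y ∈ U, outDist P W y < ∑ x, P x * ∑ y ∈ T x, W x y) :
    ∃ x, s ≤ ∑ y ∈ T x \ U, W x y := by
  by_contra! hlt
  have hsplit : ∀ x, ∑ y ∈ T x, W x y ≤ s + ∑ y ∈ U, W x y := fun x => by
    calc ∑ y ∈ T x, W x y ≤ ∑ y ∈ T x \ U ∪ U, W x y :=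
          Finset.sum_le_sum_of_subset_of_nonneg
            (Finset.subset_union_left.trans_eq Finset.sdiff_union_self_eq_union.symm)
            fun y _ _ => hW x y
      _ = ∑ y ∈ T x \ U, W x y + ∑ y ∈ U, W x y := Finset.sum_union Finset.sdiff_disjoint
      _ ≤ s + ∑ y ∈ U, W x y := by gcongr; exact (hlt x).le
  refine h.not_ge ?_
  calc ∑ x, P x * ∑ y ∈ T x, W x y ≤ ∑ x, P x * (s + ∑ y ∈ U, W x y) :=
        Finset.sum_le_sum fun x _ => mul_le_mul_of_nonneg_left (hsplit x) (hP.1 x)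
    _ = s + ∑ y ∈ U, outDist P W y := by
        simp_rw [mul_add, Finset.sum_add_distrib, ← Finset.sum_mul, hP.2, one_mul, outDist,
          Finset.mul_sum]
        rw [Finset.sum_comm]

/- A code of size `k` which cannot be extended covers too much of the output distribution. -/
lemma exists_feinstein_code {W : X → Y → ℝ} (hW : IsChannel W) {P : X → ℝ} (hP : IsDist P)
    {γ s : ℝ} (hγ : 0 < γ) {k : ℕ}
    (hk : s + (k - 1 : ℝ) / γ < ∑ x, P x * ∑ y ∈ thresholdSet P W γ x, W x y) :
    ∃ (c : Fin k → X) (D : Fin k → Finset Y), Pairwise (Disjoint on D) ∧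
      (∀ i, D i ⊆ thresholdSet P W γ (c i)) ∧ ∀ i, s ≤ ∑ y ∈ D i, W (c i) y := by
  induction k with
  | zero => exact ⟨Fin.elim0, Fin.elim0, fun i => i.elim0, fun i => i.elim0, fun i => i.elim0⟩
  | succ k ih =>
    rw [Nat.cast_succ, add_sub_cancel_right] at hk
    have hpred : s + (k - 1 : ℝ) / γ < s + k / γ := by gcongr; linarith
    obtain ⟨c, D, hdisj, hsub, hprob⟩ := ih (hpred.trans hk)
    have hcover : ∑ y ∈ Finset.univ.biUnion D, outDist P W y ≤ k / γ := by
      rw [Finset.sum_biUnion fun i _ j _ hij => hdisj hij]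
      calc ∑ i, ∑ y ∈ D i, outDist P W y ≤ ∑ _i : Fin k, 1 / γ :=
            Finset.sum_le_sum fun i _ => sum_outDist_le_one_div hW hγ (hsub i)
        _ = k / γ := by simp [div_eq_mul_inv]
    obtain ⟨x, hx⟩ := exists_le_sum_sdiff (fun x => (hW x).1) hP
      (lt_of_le_of_lt (by gcongr) hk : s + ∑ y ∈ Finset.univ.biUnion D, outDist P W y < _)
    have hnew : ∀ i, Disjoint (thresholdSet P W γ x \ Finset.univ.biUnion D) (D i) := fun i =>
      Finset.disjoint_of_subset_right (Finset.subset_biUnion_of_mem D (Finset.mem_univ i))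
        Finset.sdiff_disjoint
    have : Std.Symm (Disjoint on Fin.cons (thresholdSet P W γ x \ Finset.univ.biUnion D) D :
        Fin (k + 1) → Fin (k + 1) → Prop) := ⟨fun _ _ h => h.symm⟩
    refine ⟨Fin.cons x c, Fin.cons (thresholdSet P W γ x \ Finset.univ.biUnion D) D,
      pairwise_fin_succ_iff_of_isSymm.2 ⟨fun i => ?_, fun i j hij => ?_⟩,
      Fin.forall_fin_succ.2 ⟨?_, fun i => ?_⟩, Fin.forall_fin_succ.2 ⟨?_, fun i => ?_⟩⟩
    · simpa [Function.onFun] using hnew i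
    · simpa [Function.onFun] using hdisj hij
    · exact Finset.sdiff_subset
    · exact hsub i
    · exact hx
    · exact hprob i

end Feinstein

/-- The product of `n` independent uses of the channel `W`. -/
def blockChannel (W : X → Y → ℝ) {n : ℕ} (a : Fin n → X) (b : Fin n → Y) : ℝ :=
  ∏ k, W (a k) (b k)

/-- The law of `n` independent letters distributed according to `P`. -/
def blockDist (P : X → ℝ) {n : ℕ} (a : Fin n → X) : ℝ := ∏ k, P (a k)

/-- The encoder which sends the codeword `a` whatever the past outputs. It is only used before time
`n`, so the index never wraps around. -/
def blockEncoder {n : ℕ} [NeZero n] (a : Fin n → X) (l : List Y) : X := a (Fin.ofNat n l.length)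

section BlockCodes

omit [Fintype X] in
lemma isChannel_blockChannel {W : X → Y → ℝ} (hW : IsChannel W) (n : ℕ) :
    IsChannel (blockChannel W (n := n)) := fun a =>
  ⟨fun _ => Finset.prod_nonneg fun _ _ => (hW _).1 _, sum_prod_eq_one fun k => (hW (a k)).2⟩

lemma isDist_blockDist {P : X → ℝ} (hP : IsDist P) (n : ℕ) : IsDist (blockDist P (n := n)) :=
  ⟨fun _ => Finset.prod_nonneg fun _ _ => hP.1 _, sum_prod_eq_one fun _ => hP.2⟩

omit [Fintype Y] in
lemma outDist_blockDist (P : X → ℝ) (W : X → Y → ℝ) {n : ℕ} (b : Fin n → Y) :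
    outDist (blockDist P) (blockChannel W) b = ∏ k, outDist P W (b k) := by
  simp_rw [outDist, blockDist, blockChannel, Finset.prod_univ_sum, Fintype.piFinset_univ,
    Finset.prod_mul_distrib]

omit [Fintype X] [Fintype Y] in
lemma blockEncoder_take {n : ℕ} [NeZero n] (a : Fin n → X) (b : Fin n → Y) (k : Fin n) :
    blockEncoder a ((List.ofFn b).take k) = a k := by
  simp [blockEncoder, k.is_lt.le]

omit [Fintype X] [Fintype Y] in
lemma pathLik_blockEncoder (W : X → Y → ℝ) {n : ℕ} [NeZero n] (a : Fin n → X) (b : Fin n → Y) :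
    pathLik W (blockEncoder a) (List.ofFn b) = blockChannel W a b := by
  simp_rw [← prod_take_eq_pathLik, blockEncoder_take, blockChannel]

omit [Fintype X] in
lemma pathProb_pathLik_lt_le {W : X → Y → ℝ} (hW : IsChannel W) {q : Y → ℝ} (hq : ∀ y, 0 < q y)
    {I : ℝ} {e : List Y → X} (he : ∀ l, relEntropy (W (e l)) q = I) {B : ℝ}
    (hB : ∀ x, relEntropyVar (W x) q ≤ B) (n : ℕ) {s : ℝ} (hs : 0 < s) :
    pathProb W n e {l | pathLik W e l < exp (n * I - s) * (l.map q).prod} ≤ n * B / s ^ 2 := by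
  refine (pathProb_mono (fun x => (hW x).1) fun l hl hlik hlt => ?_).trans
    (pathProb_abs_pathSum_ge_le hW (fun x => sum_mul_centredDensity (hW x).2 q) hB n e hs)
  have hinfo : pathSum (fun x _ => relEntropy (W x) q) e l = n * I := by
    rw [pathSum_congr (φ := fun _ _ => I) fun l' _ => he l', pathSum_const, hl]
  rw [mem_ofPred_eq, pathLik_eq_exp_mul_prod (fun x => (hW x).1) hq hlik,
    pathSum_log_div_eq_add, hinfo] at hlt
  have hexp := exp_lt_exp.1 (lt_of_mul_lt_mul_right hlt
    (List.prod_nonneg fun r hr => by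
      obtain ⟨y, _, rfl⟩ := List.mem_map.1 hr
      exact (hq y).le))
  have hneg : s ≤ -pathSum (fun x => centredDensity (W x) q) e l := by linarith
  exact hneg.trans (neg_le_abs _)

lemma le_sum_thresholdSet_blockChannel {W : X → Y → ℝ} (hW : IsChannel W) {P : X → ℝ}
    (hpos : ∀ y, 0 < outDist P W y) {n : ℕ} [NeZero n] {a : Fin n → X} {I : ℝ}
    (ha : ∀ k, relEntropy (W (a k)) (outDist P W) = I) {B : ℝ}
    (hB : ∀ x, relEntropyVar (W x) (outDist P W) ≤ B) {s : ℝ} (hs : 0 < s) :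
    1 - n * B / s ^ 2 ≤ ∑ b ∈ thresholdSet (blockDist P) (blockChannel W) (exp (n * I - s)) a,
      blockChannel W a b := by
  have hmiss : ∑ b with ¬exp (n * I - s) * outDist (blockDist P) (blockChannel W) b ≤
      blockChannel W a b, blockChannel W a b ≤ n * B / s ^ 2 := by
    refine le_of_eq_of_le ?_
      (pathProb_pathLik_lt_le hW hpos (e := blockEncoder a) (fun _ => ha _) hB n hs)
    simp [pathProb, pathExp, indicator_apply, Finset.sum_filter, outDist_blockDist,
      List.map_ofFn, List.prod_ofFn, ← pathLik_blockEncoder]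
  have htotal := Finset.sum_filter_add_sum_filter_not Finset.univ
    (fun b => exp (n * I - s) * outDist (blockDist P) (blockChannel W) b ≤ blockChannel W a b)
    (blockChannel W a)
  rw [(isChannel_blockChannel hW n a).2] at htotal
  rw [thresholdSet]
  linarith

lemma exists_forall_mem_eq {ι β : Type*} [Nonempty ι] {D : ι → Finset β}
    (hD : Pairwise (Disjoint on D)) : ∃ g : β → ι, ∀ i, ∀ b ∈ D i, g b = i := by
  have hindex : ∀ b, ∃ i, ∀ j, b ∈ D j → i = j := fun b => by
    by_cases hb : ∃ i, b ∈ D i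
    · obtain ⟨i, hi⟩ := hb
      exact ⟨i, fun j hj => by_contra fun hij => Finset.disjoint_left.1 (hD hij) hi hj⟩
    · exact ⟨Classical.arbitrary ι, fun j hj => (hb ⟨j, hj⟩).elim⟩
  choose g hg using hindex
  exact ⟨g, fun i b hb => hg b i hb⟩

omit [Fintype X] in
lemma exists_errProb_le {W : X → Y → ℝ} (hW : IsChannel W) {n M : ℕ} [NeZero n] [NeZero M]
    {c : Fin M → Fin n → X} {D : Fin M → Finset (Fin n → Y)} (hD : Pairwise (Disjoint on D))
    {ε : ℝ} (h : ∀ m, 1 - ε ≤ ∑ b ∈ D m, blockChannel W (c m) b) :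
    ∃ enc dec, errProb W n M enc dec ≤ ε := by
  obtain ⟨dec, hdec⟩ := exists_forall_mem_eq hD
  have herr : ∀ m, ∑ b, blockChannel W (c m) b * (if dec b = m then 0 else 1) ≤ ε := fun m => by
    have hW' := isChannel_blockChannel hW n (c m)
    have hcorrect : ∑ b ∈ D m, blockChannel W (c m) b ≤
        ∑ b with dec b = m, blockChannel W (c m) b :=
      Finset.sum_le_sum_of_subset_of_nonneg
        (fun b hb => Finset.mem_filter.2 ⟨Finset.mem_univ b, hdec m b hb⟩) fun b _ _ => hW'.1 b
    have htotal := Finset.sum_filter_add_sum_filter_not Finset.univ (fun b => dec b = m)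
      (blockChannel W (c m))
    rw [hW'.2] at htotal
    simp_rw [mul_ite, mul_zero, mul_one, ← ite_not (dec _ = m), ← Finset.sum_filter]
    linarith [h m]
  refine ⟨fun m => blockEncoder (c m), dec, ?_⟩
  have hM : (0 : ℝ) < M := Nat.cast_pos.2 (NeZero.pos M)
  simp_rw [errProb, blockEncoder_take]
  rw [inv_mul_le_iff₀ hM]
  exact (Finset.sum_le_sum fun m _ => herr m).trans_eq (by simp)

omit [Fintype X] in
lemma errProb_nonneg {W : X → Y → ℝ} (hW : ∀ x y, 0 ≤ W x y) {n M : ℕ}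
    (enc : Fin M → List Y → X) (dec : (Fin n → Y) → Fin M) : 0 ≤ errProb W n M enc dec :=
  mul_nonneg (by positivity) (Finset.sum_nonneg fun m _ => Finset.sum_nonneg fun y _ =>
    mul_nonneg (Finset.prod_nonneg fun k _ => hW _ _) (by split_ifs <;> norm_num))

omit [Fintype X] in
lemma exists_minErr_le_of_errProb_le {W : X → Y → ℝ} (hW : ∀ x y, 0 ≤ W x y) {n M : ℕ}
    [NeZero n] [NeZero M] {enc : Fin M → List Y → X} {dec : (Fin n → Y) → Fin M} {ε : ℝ}
    (h : errProb W n M enc dec ≤ ε) :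
    ∃ R : ℝ, ⌈exp (n * R)⌉₊ = M ∧ minErr W n R ≤ ε := by
  have hceil : ⌈exp (n * (log M / n))⌉₊ = M := by
    rw [mul_div_cancel₀ _ (NeZero.ne (n : ℝ)), exp_log (Nat.cast_pos.2 (NeZero.pos M)),
      Nat.ceil_natCast]
  refine ⟨log M / n, hceil, ?_⟩
  rw [minErr, hceil]
  refine le_trans (csInf_le ⟨0, ?_⟩ ⟨enc, dec, rfl⟩) h
  rintro _ ⟨enc, dec, rfl⟩
  exact errProb_nonneg hW enc dec

end BlockCodes

/- Feinstein's construction over the block channel, with decoding threshold `exp (nC - L√n)`. -/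
lemma exists_minErr_le_and_le_ceil_exp {W : X → Y → ℝ} (hW : IsChannel W) (hcol : NoZeroColumn W)
    (hach : (capacityAchievers W).Nonempty) {ε : ℝ} (hε : 0 < ε) :
    ∃ L : ℝ, ∀ n : ℕ, n ≠ 0 → ∃ R : ℝ, minErr W n R ≤ ε ∧
      exp (n * capacity W - L * √n) * (ε / 2) ≤ ⌈exp (n * R)⌉₊ := by
  obtain ⟨P, hP⟩ := hach
  have hpos := outDist_pos_of_mem_capacityAchievers hW hcol hP
  obtain ⟨B, hB⟩ := Finite.exists_le fun x => relEntropyVar (W x) (outDist P W)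
  have hlim : Tendsto (fun L : ℝ => B / L ^ 2) atTop (𝓝 0) :=
    (tendsto_pow_atTop two_ne_zero).const_div_atTop B
  obtain ⟨L, hBL, hL⟩ :=
    ((hlim.eventually_le_const (half_pos hε)).and (eventually_gt_atTop 0)).exists
  refine ⟨L, fun n hn => ?_⟩
  have : NeZero n := ⟨hn⟩
  have hn₀ : (0 : ℝ) < n := Nat.cast_pos.2 (NeZero.pos n)
  set γ := exp (n * capacity W - L * √n)
  have hM : 0 < γ * (ε / 2) := mul_pos (exp_pos _) (half_pos hε)
  have : NeZero ⌈γ * (ε / 2)⌉₊ := ⟨(Nat.ceil_pos.2 hM).ne'⟩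
  have htypical : ∀ a : Fin n → X, blockDist P a * (1 - ε / 2) ≤ blockDist P a *
      ∑ b ∈ thresholdSet (blockDist P) (blockChannel W) γ a, blockChannel W a b := fun a => by
    rcases eq_or_ne (blockDist P a) 0 with ha | ha
    · simp [ha]
    refine mul_le_mul_of_nonneg_left (le_trans ?_ (le_sum_thresholdSet_blockChannel hW hpos
      (fun k => relEntropy_outDist_eq_capacity hW hP hpos
        (Finset.prod_ne_zero_iff.1 ha k (by simp))) hB
      (mul_pos hL (sqrt_pos.2 hn₀)))) ((isDist_blockDist hP.1 n).1 a)
    rw [mul_pow, sq_sqrt hn₀.le, mul_comm (L ^ 2), mul_div_mul_left _ _ hn₀.ne']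
    linarith
  have hsize : 1 - ε + (⌈γ * (ε / 2)⌉₊ - 1 : ℝ) / γ < ∑ a : Fin n → X, blockDist P a *
      ∑ b ∈ thresholdSet (blockDist P) (blockChannel W) γ a, blockChannel W a b := by
    have hmean := Finset.sum_le_sum fun a (_ : a ∈ Finset.univ) => htypical a
    rw [← Finset.sum_mul, (isDist_blockDist hP.1 n).2, one_mul] at hmean
    have hceil : (⌈γ * (ε / 2)⌉₊ - 1 : ℝ) / γ < ε / 2 := by
      rw [div_lt_iff₀' (exp_pos _)]
      linarith [Nat.ceil_lt_add_one hM.le]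
    linarith
  obtain ⟨c, D, hdisj, -, hprob⟩ := exists_feinstein_code (isChannel_blockChannel hW n)
    (isDist_blockDist hP.1 n) (exp_pos _) hsize
  obtain ⟨enc, dec, herr⟩ := exists_errProb_le hW hdisj hprob
  obtain ⟨R, hR, hmin⟩ := exists_minErr_le_of_errProb_le (fun x => (hW x).1) herr
  exact ⟨R, hmin, hR ▸ Nat.le_ceil _⟩

/-! ### The second-order rate -/

lemma exists_forall_eventually_SOfb_mem_Icc {W : X → Y → ℝ} (hW : IsChannel W)
    (hcol : NoZeroColumn W) (hVmin : 0 < Vmin W) (hsimple : Vmin W = Vmax W) {ε : ℝ}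
    (hε₀ : 0 < ε) (hε₁ : ε < 1) :
    ∃ b, ∀ a, √(Vmin W) * gcdfInv ε < a → ∀ᶠ n : ℕ in atTop, SOfb W ε n ∈ Icc b a := by
  obtain ⟨L, hL⟩ :=
    exists_minErr_le_and_le_ceil_exp hW hcol (capacityAchievers_nonempty hVmin.ne') hε₀
  refine ⟨log (ε / 2) - L, fun a ha => ?_⟩
  filter_upwards [eventually_ceil_exp_le_of_minErr_le hW hcol hVmin hsimple hε₀ hε₁ ha,
    eventually_ne_atTop 0] with n hupper hn
  have hsqrt : 1 ≤ √(n : ℝ) := one_le_sqrt.2 (Nat.one_le_cast.2 (Nat.one_le_iff_ne_zero.2 hn))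
  have hbound : ∀ m ∈ {m | ∃ R : ℝ, m = (⌈exp (n * R)⌉₊ : ℝ) ∧ minErr W n R ≤ ε},
      m ≤ exp (n * capacity W + a * √n) := by
    rintro _ ⟨R, rfl, hR⟩
    exact hupper R hR
  obtain ⟨R, hR, hsize⟩ := hL n hn
  have hMfb_le : Mfb W n ε ≤ exp (n * capacity W + a * √n) := csSup_le ⟨_, R, rfl, hR⟩ hbound
  have hle_Mfb : exp (n * capacity W - L * √n) * (ε / 2) ≤ Mfb W n ε :=
    hsize.trans (le_csSup ⟨_, hbound⟩ ⟨R, rfl, hR⟩)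
  have hpos : 0 < exp (n * capacity W - L * √n) * (ε / 2) := mul_pos (exp_pos _) (half_pos hε₀)
  have hlog_le := log_le_log (hpos.trans_le hle_Mfb) hMfb_le
  have hle_log := log_le_log hpos hle_Mfb
  rw [log_exp] at hlog_le
  rw [log_mul (exp_ne_zero _) (half_pos hε₀).ne', log_exp] at hle_log
  have hlogε : log (ε / 2) * √n ≤ log (ε / 2) * 1 :=
    mul_le_mul_of_nonpos_left hsqrt (log_nonpos (by linarith) (by linarith))
  rw [mem_Icc, SOfb, le_div_iff₀ (by linarith), div_le_iff₀ (by linarith)]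
  constructor <;> linarith

/-- Theorem 3 (Feedback does not improve the second-order coding rate for
simple-dispersion channels). -/
theorem feedback_no_improvement_simple_dispersion
    {X Y : Type*} [Fintype X] [Fintype Y]
    (W : X → Y → ℝ) (hW : IsChannel W) (hcol : NoZeroColumn W)
    (hVmin : 0 < Vmin W) (hsimple : Vmin W = Vmax W) :
    ∀ ε : ℝ, 0 < ε → ε < 1 →
      Filter.limsup (fun n : ℕ =>
          (Real.log (Mfb W n ε) - n * capacity W) / Real.sqrt n) Filter.atTop ≤
        Real.sqrt (Vmin W) * gcdfInv ε ∧
      Real.sqrt (Vmin W) * gcdfInv ε = Real.sqrt (Veps W ε) * gcdfInv ε := by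
  intro ε hε₀ hε₁
  refine ⟨le_of_forall_gt_imp_ge_of_dense fun a ha => ?_, by rw [Veps, ← hsimple, ite_self]⟩
  obtain ⟨b, hb⟩ := exists_forall_eventually_SOfb_mem_Icc hW hcol hVmin hsimple hε₀ hε₁
  have hIcc := hb a ha
  -- Without the lower bound `b` the `limsup` could be the junk value of an unbounded `sInf`.
  exact limsup_le_of_le (isCoboundedUnder_le_of_eventually_le atTop (hIcc.mono fun _ h => h.1))
    (hIcc.mono fun _ h => h.2)

end Paper
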